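/- arXiv:1708.04456 — 10 statements merged into one kernel-verified Lean document; each statement's English description precedes it below -/
import Mathlib

section
/- Let X be a complex Hilbert space, let A be a (possibly unbounded) self-adjoint operator on X, and let (A_n) be a sequence of self-adjoint operators on X such that each range R(A_n) is closed. Assume (A_n) is resolvent consistent with A, i.e. for every λ ∈ ℂ \ ℝ and every x ∈ X one has (λI − A_n)^{-1} x → (λI − A)^{-1} x in norm. Then the following are equivalent: (i) D(A†) = X and A_n† y → A† y in norm for every y ∈ X; (ii) sup_n ‖A_n†‖ < +∞. -/
/-!
The forward direction is the Banach–Steinhaus theorem. For the converse put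
`Kₙ y = y - Aₙ Bₙ y`, the projection of `y` onto `N(Aₙ)`, and let `Rₙ` be the resolvent of `Aₙ`
at `iε`. The identities

* `(iε - Aₙ) ((iε)⁻¹ Kₙ y - Bₙ y) = y - iε Bₙ y`,
* `(iε - Aₙ) ((iε)⁻¹ Kₙ y - Bₙ y - iε Bₙ² y) = y + ε² Bₙ² y`

(the second uses `Aₙ Bₙ² = Bₙ`, i.e. `R(Bₙ) ⊆ R(Aₙ)`) and the bound `‖Rₙ‖ ≤ 1 / ε` give, when
`‖Bₙ‖ ≤ M`,

* `‖iε Rₙ y - Kₙ y‖ ≤ 2 ε M ‖y‖`,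
* `‖(iε)⁻¹ Kₙ y - Rₙ y - Bₙ y‖ ≤ 2 ε M² ‖y‖`.

For each fixed `ε` the sequence `Rₙ y` converges, so `Kₙ y` is a uniform limit of convergent
sequences, hence convergent, and then so is `Bₙ y`. The limit of `Bₙ` is identified as the
Moore–Penrose inverse of `A` because strong resolvent convergence makes `A` the strong graph limit
of `Aₙ` (`graph_limit`, `graph_approx`). Operators are handled through their graphs throughout.
-/

open Filter Topology
open scoped InnerProductSpace

variable {X : Type*} [NormedAddCommGroup X] [InnerProductSpace ℂ X] [CompleteSpace X]

/-- The range of a partially defined linear operator, as a set. -/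
def pRange (T : X →ₗ.[ℂ] X) : Set X := {y | ∃ x : T.domain, T x = y}

/-- The kernel of a partially defined linear operator, as a set. -/
def pKer (T : X →ₗ.[ℂ] X) : Set X := {x | ∃ h : x ∈ T.domain, T ⟨x, h⟩ = 0}

/-- `B` (defined on all of `X`) is the Moore–Penrose inverse of `T`:
for every `y`, `B y ∈ D(T) ∩ N(T)ᗮ` and `T (B y) = P_{cl R(T)} y`, the latter being
expressed by `T (B y) ∈ R(T)` together with `y - T (B y) ⟂ R(T)`.
The existence of such an everywhere-defined `B` encodes `D(T†) = X`. -/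
def IsMoorePenroseInv (T : X →ₗ.[ℂ] X) (B : X → X) : Prop :=
  ∀ y : X, ∃ h : B y ∈ T.domain,
    (∀ z ∈ pKer T, ⟪B y, z⟫_ℂ = 0) ∧
    (∀ w ∈ pRange T, ⟪y - T ⟨B y, h⟩, w⟫_ℂ = 0)

/-- `R : X → X` is the (everywhere-defined) resolvent of `T` at `l`, i.e. a right inverse
of `l • I - T`.  For a self-adjoint `T` and nonreal `l` this determines `R` uniquely. -/
def IsResolventAt (T : X →ₗ.[ℂ] X) (l : ℂ) (R : X → X) : Prop :=
  ∀ x : X, ∃ h : R x ∈ T.domain, l • R x - T ⟨R x, h⟩ = x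

/-- Resolvent consistency: for every nonreal `l`, the resolvents of `Aₙ` at `l` converge
strongly to the resolvent of `A` at `l`. -/
def ResolventConsistent (An : ℕ → X →ₗ.[ℂ] X) (A : X →ₗ.[ℂ] X) : Prop :=
  ∀ l : ℂ, l.im ≠ 0 → ∀ (R : X → X) (Rn : ℕ → X → X),
    IsResolventAt A l R → (∀ n, IsResolventAt (An n) l (Rn n)) →
    ∀ x : X, Tendsto (fun n => Rn n x) atTop (𝓝 (R x))

/-- `s-lim Sₙ`: the set of all strong (norm) limits of sequences `xₙ ∈ Sₙ`. -/
def sLim {Y : Type*} [TopologicalSpace Y] (S : ℕ → Set Y) : Set Y :=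
  {x | ∃ u : ℕ → Y, (∀ n, u n ∈ S n) ∧ Tendsto u atTop (𝓝 x)}

/-- Weak convergence of a sequence in a Hilbert space. -/
def WeakTendsto (u : ℕ → X) (x : X) : Prop :=
  ∀ z : X, Tendsto (fun n => ⟪u n, z⟫_ℂ) atTop (𝓝 ⟪x, z⟫_ℂ)

/-- `w-l̃im Sₙ`: the set of all weak limits of sequences `x_j ∈ S_{k_j}` along subsequences. -/
def wLim (S : ℕ → Set X) : Set X :=
  {x | ∃ k : ℕ → ℕ, StrictMono k ∧ ∃ u : ℕ → X, (∀ j, u j ∈ S (k j)) ∧ WeakTendsto u x}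

section Helpers

set_option linter.unusedSectionVars false

lemma graph_iff (T : X →ₗ.[ℂ] X) (x y : X) :
    (x, y) ∈ T.graph ↔ ∃ h : x ∈ T.domain, T ⟨x, h⟩ = y := by
  rw [LinearPMap.mem_graph_iff]
  constructor
  · rintro ⟨⟨a, ha⟩, h1, h2⟩
    simp only at h1 h2
    subst h1
    exact ⟨ha, h2⟩
  · rintro ⟨h, h2⟩
    exact ⟨⟨x, h⟩, rfl, h2⟩

lemma graph_symm {T : X →ₗ.[ℂ] X} (hT : IsSelfAdjoint T) {x x' y y' : X}
    (hx : (x, x') ∈ T.graph) (hy : (y, y') ∈ T.graph) : ⟪x', y⟫_ℂ = ⟪x, y'⟫_ℂ := by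
  have h := LinearPMap.adjoint_isFormalAdjoint (T := T) hT.dense_domain
  rw [LinearPMap.isSelfAdjoint_def.mp hT] at h
  obtain ⟨h1, rfl⟩ := (graph_iff _ _ _).1 hx
  obtain ⟨h2, rfl⟩ := (graph_iff _ _ _).1 hy
  exact h ⟨x, h1⟩ ⟨y, h2⟩

/-- The inclusion `T† ≤ T`, in terms of graphs. -/
lemma graph_max {T : X →ₗ.[ℂ] X} (hT : IsSelfAdjoint T) {z z' : X}
    (h : ∀ a b, (a, b) ∈ T.graph → ⟪z', a⟫_ℂ = ⟪z, b⟫_ℂ) : (z, z') ∈ T.graph := by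
  have h0 : ∀ x : T.domain, ⟪z', x⟫_ℂ = ⟪z, T x⟫_ℂ := fun x => h _ _ (T.mem_graph x)
  have hz : z ∈ T.adjoint.domain := LinearPMap.mem_adjoint_domain_of_exists z ⟨z', h0⟩
  have he := LinearPMap.adjoint_apply_eq hT.dense_domain ⟨z, hz⟩ h0
  have : (z, z') ∈ T.adjoint.graph := (graph_iff _ _ _).2 ⟨hz, he⟩
  rwa [LinearPMap.isSelfAdjoint_def.mp hT] at this

lemma graph_bound {T : X →ₗ.[ℂ] X} (hT : IsSelfAdjoint T) {x x' : X} (l : ℂ)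
    (hx : (x, x') ∈ T.graph) : |l.im| * ‖x‖ ≤ ‖l • x - x'‖ := by
  rcases eq_or_ne x 0 with rfl | h0
  · simp
  have hpos : 0 < ‖x‖ := norm_pos_iff.2 h0
  have hreal : (⟪x, x'⟫_ℂ).im = 0 := by
    have h1 := graph_symm hT hx hx
    have h2 := inner_conj_symm (𝕜 := ℂ) x x'
    rw [h1] at h2
    exact Complex.conj_eq_iff_im.1 h2
  have key : (⟪x, l • x - x'⟫_ℂ).im = l.im * (‖x‖ * ‖x‖) := by
    rw [inner_sub_right, inner_smul_right, Complex.sub_im, hreal, inner_self_eq_norm_sq_to_K]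
    simp [Complex.mul_im, sq]
  have h3 : |(⟪x, l • x - x'⟫_ℂ).im| ≤ ‖x‖ * ‖l • x - x'‖ :=
    (Complex.abs_im_le_norm _).trans (norm_inner_le_norm _ _)
  rw [key, abs_mul, abs_of_pos (mul_pos hpos hpos)] at h3
  nlinarith

/-- A resolvent of a self-adjoint operator exists at every nonreal point: the range of `l - T` is
closed by `graph_bound`, and its orthogonal complement is the kernel of `conj l - T`, which is
trivial. -/
lemma exists_resolvent {T : X →ₗ.[ℂ] X} (hT : IsSelfAdjoint T) {l : ℂ} (hl : l.im ≠ 0) :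
    ∃ R : X → X, IsResolventAt T l R := by
  let f : T.domain →ₗ[ℂ] X := l • T.domain.subtype - T.toFun
  have hf : ∀ x : T.domain, f x = l • (x : X) - T x := fun x => rfl
  have hpos : 0 < |l.im| := abs_pos.2 hl
  have hcl : IsClosed (LinearMap.range f : Set X) := by
    rw [← isSeqClosed_iff_isClosed]
    intro u y hu huy
    choose v hv using hu
    have hvc : CauchySeq (fun n => (v n : X)) := by
      rw [Metric.cauchySeq_iff']
      intro e he
      obtain ⟨N, hN⟩ := Metric.cauchySeq_iff'.1 huy.cauchySeq (|l.im| * e) (mul_pos hpos he)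
      refine ⟨N, fun n hn => ?_⟩
      have h1 := graph_bound hT l (T.mem_graph (v n - v N))
      have h2 := hN n hn
      rw [dist_eq_norm, ← hv n, ← hv N, ← map_sub, hf] at h2
      rw [dist_eq_norm]
      have h3 := h1.trans_lt h2
      exact lt_of_mul_lt_mul_left h3 hpos.le
    obtain ⟨x, hx⟩ := cauchySeq_tendsto_of_complete hvc
    have hTx : Tendsto (fun n => T (v n)) atTop (𝓝 (l • x - y)) := by
      have : (fun n => T (v n)) = fun n => l • (v n : X) - u n := by
        funext n; rw [← hv n, hf]; abel
      rw [this]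
      exact (hx.const_smul l).sub huy
    have hg : (x, l • x - y) ∈ T.graph :=
      (hT.isClosed : IsClosed (T.graph : Set (X × X))).mem_of_tendsto
        (hx.prodMk_nhds hTx) (Eventually.of_forall fun n => T.mem_graph (v n))
    obtain ⟨h1, h2⟩ := (graph_iff _ _ _).1 hg
    exact ⟨⟨x, h1⟩, by rw [hf, h2]; simp⟩
  have : CompleteSpace (LinearMap.range f) := hcl.completeSpace_coe
  have htop : LinearMap.range f = ⊤ := by
    rw [← Submodule.orthogonal_eq_bot_iff, Submodule.eq_bot_iff]
    intro z hz
    rw [Submodule.mem_orthogonal'] at hz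
    have hg : (z, (starRingEnd ℂ l) • z) ∈ T.graph := by
      refine graph_max hT fun a b hab => ?_
      obtain ⟨h1, rfl⟩ := (graph_iff _ _ _).1 hab
      have := hz _ ⟨⟨a, h1⟩, rfl⟩
      rw [hf, inner_sub_right, inner_smul_right, sub_eq_zero] at this
      rw [inner_smul_left, Complex.conj_conj, this]
    have := graph_bound hT (starRingEnd ℂ l) hg
    simp only [sub_self, norm_zero, Complex.conj_im, abs_neg] at this
    have h0 := norm_nonneg z
    exact norm_eq_zero.1 (by nlinarith)
  have hs : ∀ x : X, ∃ r : T.domain, f r = x := fun x => by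
    have : x ∈ LinearMap.range f := htop ▸ Submodule.mem_top
    exact this
  choose R hR using hs
  exact ⟨fun x => R x, fun x => ⟨(R x).2, hR x⟩⟩

lemma resolvent_graph {T : X →ₗ.[ℂ] X} {l : ℂ} {R : X → X} (hR : IsResolventAt T l R) (x : X) :
    (R x, l • R x - x) ∈ T.graph := by
  obtain ⟨h, h2⟩ := hR x
  refine (graph_iff _ _ _).2 ⟨h, ?_⟩
  rw [eq_sub_iff_add_eq, ← eq_sub_iff_add_eq', h2]

/-- Stability: `u` is as close to `R y` as `(l - T) u` is to `y`, up to the factor `|Im l|`. -/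
lemma resolvent_lip {T : X →ₗ.[ℂ] X} (hT : IsSelfAdjoint T) {l : ℂ} {R : X → X}
    (hR : IsResolventAt T l R) (y : X) {u u' : X} (hu : (u, u') ∈ T.graph) :
    |l.im| * ‖R y - u‖ ≤ ‖y - (l • u - u')‖ := by
  have h := graph_bound hT l (T.graph.sub_mem (resolvent_graph hR y) hu)
  simp only at h
  have e : l • (R y - u) - (l • R y - y - u') = y - (l • u - u') := by
    rw [smul_sub]; abel
  rwa [e] at h

/-- A sequence uniformly approximated by convergent sequences converges. -/
lemma tendsto_of_approx {u : ℕ → X}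
    (h : ∀ d : ℝ, 0 < d → ∃ v : ℕ → X, ∃ a, Tendsto v atTop (𝓝 a) ∧ ∀ n, ‖v n - u n‖ ≤ d) :
    ∃ a, Tendsto u atTop (𝓝 a) := by
  refine cauchySeq_tendsto_of_complete (Metric.cauchySeq_iff'.2 fun e he => ?_)
  obtain ⟨v, a, hv, hvu⟩ := h (e / 4) (by positivity)
  obtain ⟨N, hN⟩ := Metric.cauchySeq_iff'.1 hv.cauchySeq (e / 4) (by positivity)
  refine ⟨N, fun n hn => ?_⟩
  have h1 := hvu n
  have h2 := hvu N
  have h3 := hN n hn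
  rw [← dist_eq_norm] at h1 h2
  have h4 := dist_triangle4 (u n) (v n) (v N) (u N)
  rw [dist_comm (u n) (v n)] at h4
  linarith

lemma mp_graph {T : X →ₗ.[ℂ] X} {B : X → X} (hB : IsMoorePenroseInv T B) (y : X) :
    ∃ p, (B y, p) ∈ T.graph ∧ (∀ z, (z, 0) ∈ T.graph → ⟪B y, z⟫_ℂ = 0) ∧
      ∀ a b, (a, b) ∈ T.graph → ⟪y - p, b⟫_ℂ = 0 := by
  obtain ⟨h, h1, h2⟩ := hB y
  refine ⟨_, (graph_iff _ _ _).2 ⟨h, rfl⟩, fun z hz => h1 z ((graph_iff _ _ _).1 hz),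
    fun a b hab => ?_⟩
  obtain ⟨h3, h4⟩ := (graph_iff _ _ _).1 hab
  exact h2 b ⟨⟨a, h3⟩, h4⟩

lemma mp_of_graph {T : X →ₗ.[ℂ] X} {B : X → X}
    (h : ∀ y, ∃ p, (B y, p) ∈ T.graph ∧ (∀ z, (z, 0) ∈ T.graph → ⟪B y, z⟫_ℂ = 0) ∧
      ∀ a b, (a, b) ∈ T.graph → ⟪y - p, b⟫_ℂ = 0) : IsMoorePenroseInv T B := by
  intro y
  obtain ⟨p, hp, h1, h2⟩ := h y
  obtain ⟨hd, rfl⟩ := (graph_iff _ _ _).1 hp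
  refine ⟨hd, fun z hz => h1 z ((graph_iff _ _ _).2 hz), ?_⟩
  rintro w ⟨x, rfl⟩
  exact h2 _ _ (T.mem_graph x)

/-- `R(T)ᗮ ⊆ N(T)`. -/
lemma ker_of_orth {T : X →ₗ.[ℂ] X} (hT : IsSelfAdjoint T) {k : X}
    (h : ∀ a b, (a, b) ∈ T.graph → ⟪k, b⟫_ℂ = 0) : (k, 0) ∈ T.graph :=
  graph_max hT fun a b hab => by rw [h a b hab, inner_zero_left]

/-- `x - B T x ∈ N(T)`. -/
lemma mp_ker {T : X →ₗ.[ℂ] X} {B : X → X} (hB : IsMoorePenroseInv T B) {x x' : X}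
    (hx : (x, x') ∈ T.graph) : (x - B x', 0) ∈ T.graph := by
  obtain ⟨p, hp, -, h⟩ := mp_graph hB x'
  have hs := T.graph.sub_mem hx hp
  have h0 : x' - p = 0 := inner_self_eq_zero.1 (h _ _ hs)
  simpa [h0] using hs

/-- `T B² = B`. -/
lemma mp_sq {T : X →ₗ.[ℂ] X} (hT : IsSelfAdjoint T) {B : X → X} (hB : IsMoorePenroseInv T B)
    (y : X) : (B (B y), B y) ∈ T.graph := by
  obtain ⟨p, hp, -, h⟩ := mp_graph hB (B y)
  obtain ⟨-, -, h1, -⟩ := mp_graph hB y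
  have hk := ker_of_orth hT h
  have e : B y - p = 0 := by
    -- `k = B y - p` lies in `N(T)`, so it is orthogonal to `B y`, and it is orthogonal to `p ∈ R(T)`.
    refine inner_self_eq_zero (𝕜 := ℂ).1 ?_
    have e1 := h1 _ hk
    have e2 := h _ _ hp
    rw [inner_sub_left, e1, ← inner_conj_symm, e2]
    simp
  rwa [← sub_eq_zero.1 e] at hp

variable {An : ℕ → X →ₗ.[ℂ] X} {A : X →ₗ.[ℂ] X}

/-- Strong limits of sequences in the graphs of `Aₙ` lie in the graph of `A`. -/
lemma graph_limit (hA : IsSelfAdjoint A) (hAn : ∀ n, IsSelfAdjoint (An n))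
    (hres : ResolventConsistent An A) {x x' : ℕ → X} {a a' : X}
    (hg : ∀ n, (x n, x' n) ∈ (An n).graph) (hx : Tendsto x atTop (𝓝 a))
    (hx' : Tendsto x' atTop (𝓝 a')) : (a, a') ∈ A.graph := by
  have hI : Complex.I.im ≠ 0 := by simp
  obtain ⟨R, hR⟩ := exists_resolvent hA hI
  choose Rn hRn using fun n => exists_resolvent (hAn n) hI
  have hc := hres _ hI R Rn hR hRn (Complex.I • a - a')
  have hd : Tendsto (fun n => Rn n (Complex.I • a - a') - x n) atTop (𝓝 0) := by
    have h0 : Tendsto (fun n => Complex.I • a - a' - (Complex.I • x n - x' n)) atTop (𝓝 0) := by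
      simpa using ((hx.const_smul Complex.I).sub hx').const_sub (Complex.I • a - a')
    refine squeeze_zero_norm (fun n => ?_) (tendsto_zero_iff_norm_tendsto_zero.1 h0)
    simpa using resolvent_lip (hAn n) (hRn n) (Complex.I • a - a') (hg n)
  have e : R (Complex.I • a - a') = a := by
    have := tendsto_nhds_unique hd (hc.sub hx)
    exact (sub_eq_zero.1 this.symm)
  have := resolvent_graph hR (Complex.I • a - a')
  rw [e] at this
  simpa using this

/-- Every point of the graph of `A` is a strong limit of points in the graphs of `Aₙ`. -/
lemma graph_approx (hA : IsSelfAdjoint A) (hAn : ∀ n, IsSelfAdjoint (An n))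
    (hres : ResolventConsistent An A) {a a' : X} (ha : (a, a') ∈ A.graph) :
    ∃ x x' : ℕ → X, (∀ n, (x n, x' n) ∈ (An n).graph) ∧ Tendsto x atTop (𝓝 a) ∧
      Tendsto x' atTop (𝓝 a') := by
  have hI : Complex.I.im ≠ 0 := by simp
  obtain ⟨R, hR⟩ := exists_resolvent hA hI
  choose Rn hRn using fun n => exists_resolvent (hAn n) hI
  have hc := hres _ hI R Rn hR hRn (Complex.I • a - a')
  have e : R (Complex.I • a - a') = a := by
    have := resolvent_lip hA hR (Complex.I • a - a') ha
    simp only [Complex.I_im, abs_one, one_mul, sub_self, norm_zero] at this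
    exact sub_eq_zero.1 (norm_le_zero_iff.1 this)
  rw [e] at hc
  refine ⟨_, _, fun n => resolvent_graph (hRn n) (Complex.I • a - a'), hc, ?_⟩
  simpa using (hc.const_smul Complex.I).sub_const (Complex.I • a - a')

/-- `iε R` approximates the projection onto `N(T)`, with an error depending on `T` only through
the bound `M` on its Moore–Penrose inverse. -/
lemma kernel_estimate {T : X →ₗ.[ℂ] X} (hT : IsSelfAdjoint T) {B : X →L[ℂ] X} {M : ℝ}
    (hM : ‖B‖ ≤ M) {y p : X} (hp : (B y, p) ∈ T.graph) (hk : (y - p, 0) ∈ T.graph) {e : ℝ}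
    (he : 0 < e) {R : X → X} (hR : IsResolventAt T (e * Complex.I) R) :
    ‖((e : ℂ) * Complex.I) • R y - (y - p)‖ ≤ 2 * e * (M * ‖y‖) := by
  set l : ℂ := e * Complex.I with hl
  have hl0 : l ≠ 0 := by simp [hl, he.ne']
  have him : |l.im| = e := by simp [hl, abs_of_pos he]
  have hln : ‖l‖ = e := by simp [hl, abs_of_pos he]
  have hu := T.graph.sub_mem (T.graph.smul_mem l⁻¹ hk) hp
  have h := resolvent_lip hT hR y hu
  simp only [Prod.smul_fst, Prod.smul_snd, smul_zero, zero_sub] at h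
  have e1 : y - (l • (l⁻¹ • (y - p) - B y) - -p) = l • B y := by
    rw [smul_sub, smul_inv_smul₀ hl0]; abel
  have hBy : ‖B y‖ ≤ M * ‖y‖ := B.le_of_opNorm_le hM y
  rw [e1, norm_smul, hln, him] at h
  have h' := le_of_mul_le_mul_left h he
  have e2 : l • R y - (y - p) = l • (R y - (l⁻¹ • (y - p) - B y)) - l • B y := by
    rw [smul_sub, smul_sub, smul_inv_smul₀ hl0]; abel
  rw [e2]
  refine (norm_sub_le _ _).trans ?_
  rw [norm_smul, norm_smul, hln]
  nlinarith

/-- Away from `N(T)`, `-R` approximates the Moore–Penrose inverse; the term `(iε)⁻¹ (y - p)` cancels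
the singular contribution of `N(T)` to `R y`. -/
lemma inverse_estimate {T : X →ₗ.[ℂ] X} (hT : IsSelfAdjoint T) {B : X →L[ℂ] X} {M : ℝ}
    (hM : ‖B‖ ≤ M) {y p : X} (hp : (B y, p) ∈ T.graph) (hk : (y - p, 0) ∈ T.graph)
    (hsq : (B (B y), B y) ∈ T.graph) {e : ℝ}
    (he : 0 < e) {R : X → X} (hR : IsResolventAt T (e * Complex.I) R) :
    ‖((e : ℂ) * Complex.I)⁻¹ • (y - p) - R y - B y‖ ≤ 2 * e * (M * (M * ‖y‖)) := by
  set l : ℂ := e * Complex.I with hl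
  have hl0 : l ≠ 0 := by simp [hl, he.ne']
  have him : |l.im| = e := by simp [hl, abs_of_pos he]
  have hln : ‖l‖ = e := by simp [hl, abs_of_pos he]
  have hu := T.graph.sub_mem (T.graph.sub_mem (T.graph.smul_mem l⁻¹ hk) hp)
    (T.graph.smul_mem l hsq)
  have h := resolvent_lip hT hR y hu
  simp only [Prod.smul_fst, Prod.smul_snd, Prod.fst_sub, Prod.snd_sub, smul_zero, zero_sub] at h
  have e1 : y - (l • (l⁻¹ • (y - p) - B y - l • B (B y)) - (-p - l • B y)) =
      l • l • B (B y) := by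
    rw [smul_sub, smul_sub, smul_inv_smul₀ hl0]; abel
  have hM0 : 0 ≤ M := (norm_nonneg _).trans hM
  have hBy : ‖B (B y)‖ ≤ M * (M * ‖y‖) := (B.le_of_opNorm_le hM _).trans
    (mul_le_mul_of_nonneg_left (B.le_of_opNorm_le hM y) hM0)
  rw [e1, norm_smul, norm_smul, hln, him] at h
  have h' := le_of_mul_le_mul_left h he
  have e2 : l⁻¹ • (y - p) - R y - B y =
      l • B (B y) - (R y - (l⁻¹ • (y - p) - B y - l • B (B y))) := by
    abel
  rw [e2]
  refine (norm_sub_le _ _).trans ?_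
  rw [norm_smul, hln]
  nlinarith

end Helpers

/-- For a self-adjoint `A` and self-adjoint `Aₙ` with closed ranges
(whose Moore–Penrose inverses are the bounded operators `Bn n`), assuming resolvent
consistency: `D(A†) = X` together with strong convergence `Aₙ† y → A† y` holds
if and only if `sup_n ‖Aₙ†‖ < ∞`. -/
theorem mp_inverse_strong_convergence_iff_uniform_bound
    (A : X →ₗ.[ℂ] X) (hA : IsSelfAdjoint A)
    (An : ℕ → X →ₗ.[ℂ] X) (hAn : ∀ n, IsSelfAdjoint (An n))
    (hRanClosed : ∀ n, IsClosed (pRange (An n)))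
    (Bn : ℕ → X →L[ℂ] X) (hBn : ∀ n, IsMoorePenroseInv (An n) (Bn n))
    (hres : ResolventConsistent An A) :
    (∃ B : X → X, IsMoorePenroseInv A B ∧
        ∀ y : X, Tendsto (fun n => Bn n y) atTop (𝓝 (B y))) ↔
      ∃ M : ℝ, ∀ n, ‖Bn n‖ ≤ M := by
  constructor
  · rintro ⟨B, -, hB⟩
    refine banach_steinhaus fun y => ?_
    obtain ⟨C, hC⟩ := (hB y).norm.bddAbove_range
    exact ⟨C, fun n => hC ⟨n, rfl⟩⟩
  · rintro ⟨M, hM⟩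
    have hM0 : 0 ≤ M := (norm_nonneg _).trans (hM 0)
    choose P hP hPk hPr using fun n y => mp_graph (hBn n) y
    have hk : ∀ n y, (y - P n y, 0) ∈ (An n).graph := fun n y => ker_of_orth (hAn n) (hPr n y)
    have hl : ∀ e : ℝ, 0 < e → ((e : ℂ) * Complex.I).im ≠ 0 := by
      intro e he
      simpa using ne_of_gt he
    -- A positive `ε` making the error bounds `2 ε C` small.
    have hsmall : ∀ C d : ℝ, 0 ≤ C → 0 < d → ∃ e : ℝ, 0 < e ∧ 2 * e * C ≤ d := by
      intro C d hC hd
      refine ⟨d / (2 * (C + 1)), by positivity, ?_⟩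
      rw [mul_div_assoc', div_mul_eq_mul_div, div_le_iff₀ (by positivity)]
      nlinarith
    have hK : ∀ y, ∃ k, Tendsto (fun n => y - P n y) atTop (𝓝 k) := by
      intro y
      refine tendsto_of_approx fun d hd => ?_
      obtain ⟨e, he, hed⟩ := hsmall (M * ‖y‖) d (by positivity) hd
      obtain ⟨R, hR⟩ := exists_resolvent hA (hl e he)
      choose Rn hRn using fun n => exists_resolvent (hAn n) (hl e he)
      have hc := hres _ (hl e he) R Rn hR hRn y
      exact ⟨_, _, hc.const_smul ((e : ℂ) * Complex.I), fun n =>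
        (kernel_estimate (hAn n) (hM n) (hP n y) (hk n y) he (hRn n)).trans hed⟩
    choose K hK using hK
    have hB : ∀ y, ∃ b, Tendsto (fun n => Bn n y) atTop (𝓝 b) := by
      intro y
      refine tendsto_of_approx fun d hd => ?_
      obtain ⟨e, he, hed⟩ := hsmall (M * (M * ‖y‖)) d (by positivity) hd
      obtain ⟨R, hR⟩ := exists_resolvent hA (hl e he)
      choose Rn hRn using fun n => exists_resolvent (hAn n) (hl e he)
      have hc := hres _ (hl e he) R Rn hR hRn y
      exact ⟨_, _, ((hK y).const_smul ((e : ℂ) * Complex.I)⁻¹).sub hc, fun n =>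
        (inverse_estimate (hAn n) (hM n) (hP n y) (hk n y) (mp_sq (hAn n) (hBn n) y) he
          (hRn n)).trans hed⟩
    choose B hB using hB
    refine ⟨B, mp_of_graph fun y => ⟨y - K y, ?_, fun z hz => ?_, fun a b hab => ?_⟩, hB⟩
    · refine graph_limit hA hAn hres (hP · y) (hB y) ?_
      simpa using (hK y).const_sub y
    · obtain ⟨x, x', hg, hx, hx'⟩ := graph_approx hA hAn hres hz
      have hBx : Tendsto (fun n => Bn n (x' n)) atTop (𝓝 0) := by
        refine squeeze_zero_norm (fun n => (Bn n).le_of_opNorm_le (hM n) (x' n)) ?_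
        simpa using hx'.norm.const_mul M
      -- `xₙ - Bₙ Aₙ xₙ` lies in `N(Aₙ)` and still converges to `z`.
      have hlim := (hB y).inner (𝕜 := ℂ) (hx.sub hBx)
      simp only [fun n => hPk n y _ (mp_ker (hBn n) (hg n)), sub_zero] at hlim
      exact (tendsto_nhds_unique hlim tendsto_const_nhds)
    · obtain ⟨x, x', hg, -, hx'⟩ := graph_approx hA hAn hres hab
      have hlim := (hK y).inner (𝕜 := ℂ) hx'
      simp only [fun n => hPr n y _ _ (hg n)] at hlim
      rw [sub_sub_cancel]
      exact (tendsto_nhds_unique hlim tendsto_const_nhds)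
end

section
/- Let X be a complex Hilbert space, let A be a (possibly unbounded) self-adjoint operator on X, and let (A_n) be a sequence of self-adjoint operators on X such that each range R(A_n) is closed. Assume (A_n) is resolvent consistent with A, i.e. for every λ ∈ ℂ \ ℝ and every x ∈ X one has (λI − A_n)^{-1} x → (λI − A)^{-1} x in norm. If sup_n ‖A_n†‖ < +∞, then R(A) is closed, D(A†) = X, A† is bounded, and A_n† y → A† y in norm for every y ∈ X. -/
/-!
The spectra of the `Aₙ` avoid `{0 < |t| < 1/M}`, where `M` bounds the norms of the `Bₙ = Aₙ†`.
This gives, for `l = i s` with `s > 0` small, a Laurent expansion of the resolvent at `0`,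

  `(l - Aₙ)⁻¹ = l⁻¹ Qₙ - Bₙ + O(s)`,  `Qₙ` the orthogonal projection onto `ker Aₙ`,

with a remainder that is uniform in `n` (`norm_smul_sub_le`, `norm_sub_add_le`). Hence `Qₙ y` is a
uniform limit, as `s → 0`, of sequences `l (l - Aₙ)⁻¹ y` which converge in `n` by resolvent
consistency, so it converges; then `Bₙ y` converges for the same reason
(`exists_tendsto_of_approx`). The limit `B` is bounded by Banach–Steinhaus.

To identify `B` with `A†`: resolvent convergence implies that limits of points of the graphs
of the `Aₙ` lie in the graph of `A` (`mem_of_tendsto`), so `B y ∈ D(A)`, and `y - A B y = lim Qₙ y`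
lies in `ker A`, which is orthogonal to `R(A)`. Every `z ∈ ker A` is the limit of
`Qₙ z ∈ ker Aₙ`, because `l (l - A)⁻¹ z = z`; thus `B y ⟂ ker A`. Finally, `R(A)` is closed since
for `y` in its closure `y - A B y` is both in the closure of `R(A)` and orthogonal to it.

Operators are handled through their graphs, as submodules of `X × X`.
-/

open Filter Topology
open scoped InnerProductSpace

variable {X : Type*} [NormedAddCommGroup X] [InnerProductSpace ℂ X] [CompleteSpace X]

namespace MPConv

/-! ### Self-adjoint graphs and their resolvents -/

/-- A submodule of `X × X` which equals its own adjoint: the graph form of self-adjointness. -/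
def SelfAdj (G : Submodule ℂ (X × X)) : Prop :=
  ∀ x y, (x, y) ∈ G ↔ ∀ a b, (a, b) ∈ G → ⟪b, x⟫_ℂ = ⟪a, y⟫_ℂ

lemma selfAdj_graph {T : X →ₗ.[ℂ] X} (hT : IsSelfAdjoint T) : SelfAdj T.graph := by
  intro x y
  have h := LinearPMap.adjoint_graph_eq_graph_adjoint hT.dense_domain
  rw [LinearPMap.isSelfAdjoint_def.1 hT] at h
  have h2 : (x, y) ∈ T.graph ↔ (x, y) ∈ T.graph.adjoint := by rw [← h]
  rw [h2, Submodule.mem_adjoint_iff]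
  simp only [sub_eq_zero]

/-- The point `i s` of the imaginary axis. -/
noncomputable def im (s : ℝ) : ℂ := Complex.I * s

lemma norm_im {s : ℝ} (hs : 0 < s) : ‖im s‖ = s := by
  simp [im, abs_of_pos hs]

lemma im_ne {s : ℝ} (hs : 0 < s) : im s ≠ 0 := by
  rw [← norm_pos_iff, norm_im hs]; exact hs

variable {G : Submodule ℂ (X × X)}

/-- Pythagoras for `i s - T` with `T` symmetric: the cross term vanishes as `⟪u, T u⟫` is real. -/
lemma norm_sq_eq (hG : SelfAdj G) {u v : X} (h : (u, v) ∈ G) (s : ℝ) :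
    ‖im s • u - v‖ ^ 2 = s ^ 2 * ‖u‖ ^ 2 + ‖v‖ ^ 2 := by
  have h1 : ⟪v, u⟫_ℂ = ⟪u, v⟫_ℂ := (hG u v).1 h u v h
  have h2 : (⟪u, v⟫_ℂ).im = 0 := by
    have h3 := inner_conj_symm (𝕜 := ℂ) u v
    rw [h1] at h3
    exact Complex.conj_eq_iff_im.1 h3
  have h4 := @norm_sub_sq ℂ X _ _ _ (im s • u) v
  rw [h4, inner_smul_left, norm_smul]
  simp [im, h2, mul_pow]

lemma norm_fst_le (hG : SelfAdj G) {u v : X} (h : (u, v) ∈ G) (s : ℝ) :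
    s * ‖u‖ ≤ ‖im s • u - v‖ := by
  have h1 := norm_sq_eq hG h s
  refine le_of_sq_le_sq ?_ (norm_nonneg _)
  nlinarith [sq_nonneg ‖v‖]

lemma norm_snd_le (hG : SelfAdj G) {u v : X} (h : (u, v) ∈ G) (s : ℝ) :
    ‖v‖ ≤ ‖im s • u - v‖ := by
  have h1 := norm_sq_eq hG h s
  refine le_of_sq_le_sq ?_ (norm_nonneg _)
  nlinarith [mul_nonneg (sq_nonneg s) (sq_nonneg ‖u‖)]

lemma isClosed_of_selfAdj (hG : SelfAdj G) : IsClosed (G : Set (X × X)) := by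
  have : (G : Set (X × X)) =
      ⋂ p ∈ G, {q : X × X | ⟪p.2, q.1⟫_ℂ = ⟪p.1, q.2⟫_ℂ} := by
    ext ⟨x, y⟩
    simp only [SetLike.mem_coe, Set.mem_iInter]
    rw [hG x y]
    exact ⟨fun h p hp => h p.1 p.2 hp, fun h a b hab => h (a, b) hab⟩
  rw [this]
  refine isClosed_biInter fun p _ => isClosed_eq ?_ ?_ <;> fun_prop

/-- `i s - T` is onto for self-adjoint `T`: its range is closed because it is bounded below, and a
vector orthogonal to the range is an eigenvector of `T` for `-i s`, hence zero. -/
lemma exists_resolvent (hG : SelfAdj G) {s : ℝ} (hs : 0 < s) (x : X) :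
    ∃ u, (u, im s • u - x) ∈ G := by
  let Φ : G →L[ℂ] X :=
    ((im s • ContinuousLinearMap.fst ℂ X X) - ContinuousLinearMap.snd ℂ X X).comp G.subtypeL
  have hΦ : ∀ p : G, Φ p = im s • (p : X × X).1 - (p : X × X).2 := fun p => rfl
  have : CompleteSpace G := (isClosed_of_selfAdj hG).completeSpace_coe
  have hanti : AntilipschitzWith (Real.toNNReal (s⁻¹ + 1)) Φ := by
    refine Φ.antilipschitz_of_bound fun p => ?_
    have h1 := norm_fst_le hG (u := (p : X × X).1) (v := (p : X × X).2) p.2 s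
    have h2 := norm_snd_le hG (u := (p : X × X).1) (v := (p : X × X).2) p.2 s
    rw [← hΦ] at h1 h2
    rw [Real.coe_toNNReal _ (by positivity)]
    have h3 : ‖(p : X × X).1‖ ≤ s⁻¹ * ‖Φ p‖ := by
      rw [inv_mul_eq_div, le_div_iff₀ hs]; linarith
    change max ‖(p : X × X).1‖ ‖(p : X × X).2‖ ≤ _
    have h4 : 0 ≤ s⁻¹ * ‖Φ p‖ := by positivity
    have h5 := norm_nonneg (Φ p)
    apply max_le <;> linarith
  have hcl : IsClosed (Set.range Φ) := hanti.isClosed_range Φ.uniformContinuous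
  let S : Submodule ℂ X := LinearMap.range (Φ : G →ₗ[ℂ] X)
  have hScl : IsClosed (S : Set X) := by
    have : (S : Set X) = Set.range Φ := by ext; simp [S]
    rw [this]; exact hcl
  have : CompleteSpace S := hScl.completeSpace_coe
  have hbot : Sᗮ = ⊥ := by
    rw [Submodule.eq_bot_iff]
    intro w hw
    rw [Submodule.mem_orthogonal] at hw
    have hwG : (w, -(im s • w)) ∈ G := by
      rw [hG]
      intro a b hab
      have h1 := hw (Φ ⟨(a, b), hab⟩) ⟨_, rfl⟩
      rw [hΦ] at h1
      simp only [inner_sub_left, inner_smul_left] at h1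
      rw [inner_neg_right, inner_smul_right]
      have h2 : (starRingEnd ℂ) (im s) = - im s := by simp [im]
      rw [h2] at h1
      linear_combination -h1
    have h4 := (hG _ _).1 hwG _ _ hwG
    have h2 : (starRingEnd ℂ) (im s) = - im s := by simp [im]
    rw [inner_neg_right, inner_neg_left, inner_smul_left, inner_smul_right, h2] at h4
    have h5 : 2 * im s * ⟪w, w⟫_ℂ = 0 := by linear_combination h4
    have h6 : ⟪w, w⟫_ℂ = 0 := by
      rcases mul_eq_zero.1 h5 with h | h
      · exact absurd h (mul_ne_zero two_ne_zero (im_ne hs))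
      · exact h
    exact inner_self_eq_zero.1 h6
  have htop : S = ⊤ := Submodule.orthogonal_eq_bot_iff.1 hbot
  obtain ⟨p, hp⟩ : x ∈ S := htop ▸ Submodule.mem_top
  have hp' : im s • (p : X × X).1 - (p : X × X).2 = x := hp
  refine ⟨(p : X × X).1, ?_⟩
  have : im s • (p : X × X).1 - x = (p : X × X).2 := by rw [← hp']; abel
  rw [this]
  exact p.2

lemma resolvent_unique (hG : SelfAdj G) {s : ℝ} (hs : 0 < s) {x u u' : X}
    (h : (u, im s • u - x) ∈ G) (h' : (u', im s • u' - x) ∈ G) : u = u' := by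
  have h1 := norm_fst_le hG (G.sub_mem h h') s
  have h2 : im s • (u - u') - ((im s • u - x) - (im s • u' - x)) = 0 := by
    rw [smul_sub]; abel
  simp only at h1
  rw [h2, norm_zero] at h1
  have h3 : ‖u - u'‖ ≤ 0 := by
    by_contra! h4
    nlinarith
  exact sub_eq_zero.1 (norm_le_zero_iff.1 h3)

/-! ### Expansion of the resolvent at zero and the Moore–Penrose inverse -/

/-- Here `u` is the resolvent at `i s` of `y = q + T b`, where `q ∈ ker T`. -/
lemma norm_smul_sub_le (hG : SelfAdj G) {s : ℝ} (hs : 0 < s) {y u q b : X}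
    (hu : (u, im s • u - y) ∈ G) (hq : (q, 0) ∈ G) (hb : (b, y - q) ∈ G) :
    ‖im s • u - q‖ ≤ s * ‖b‖ := by
  have h1 := G.add_mem (G.sub_mem hu (G.smul_mem (im s)⁻¹ hq)) hb
  have e1 : (im s • u - y) - (im s)⁻¹ • (0 : X) + (y - q) = im s • u - q := by
    rw [smul_zero]; abel
  have h2 := norm_snd_le hG h1 s
  simp only [Prod.fst_add, Prod.snd_add, Prod.fst_sub, Prod.snd_sub, Prod.smul_snd,
    Prod.smul_fst] at h2
  have e2 : im s • (u - (im s)⁻¹ • q + b) - (im s • u - q) = im s • b := by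
    rw [smul_add, smul_sub, smul_inv_smul₀ (im_ne hs)]; abel
  rw [e1, e2, norm_smul, norm_im hs] at h2
  exact h2

/-- Here `u` is the resolvent at `i s` of `y = q + T b`, where `q ∈ ker T` and `b = T c`. -/
lemma norm_sub_add_le (hG : SelfAdj G) {s : ℝ} (hs : 0 < s) {y u q b c : X}
    (hu : (u, im s • u - y) ∈ G) (hq : (q, 0) ∈ G) (hb : (b, y - q) ∈ G) (hc : (c, b) ∈ G) :
    ‖u - (im s)⁻¹ • q + b‖ ≤ 2 * s * ‖c‖ := by
  have h1 := G.add_mem (G.add_mem (G.sub_mem hu (G.smul_mem (im s)⁻¹ hq)) hb)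
    (G.smul_mem (im s) hc)
  have h2 := norm_fst_le hG h1 s
  simp only [Prod.fst_add, Prod.snd_add, Prod.fst_sub, Prod.snd_sub, Prod.smul_snd,
    Prod.smul_fst] at h2
  have e2 : im s • (u - (im s)⁻¹ • q + b + im s • c) -
      ((im s • u - y) - (im s)⁻¹ • (0 : X) + (y - q) + im s • b) = im s • im s • c := by
    rw [smul_add, smul_add, smul_sub, smul_inv_smul₀ (im_ne hs), smul_zero]; abel
  rw [e2, norm_smul, norm_smul, norm_im hs] at h2
  have h3 : ‖u - (im s)⁻¹ • q + b + im s • c‖ ≤ s * ‖c‖ := le_of_mul_le_mul_left h2 hs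
  have h4 := norm_sub_le (u - (im s)⁻¹ • q + b + im s • c) (im s • c)
  rw [add_sub_cancel_right, norm_smul, norm_im hs] at h4
  linarith

/-- Graph form of `IsMoorePenroseInv`, with `Q` the orthogonal projection onto the kernel. -/
lemma exists_kernel_part {T : X →ₗ.[ℂ] X} (hT : IsSelfAdjoint T) {B : X → X}
    (hB : IsMoorePenroseInv T B) :
    ∃ Q : X → X, ∀ y, (Q y, 0) ∈ T.graph ∧ (B y, y - Q y) ∈ T.graph ∧
      ∀ z, (z, 0) ∈ T.graph → ⟪B y, z⟫_ℂ = 0 := by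
  choose h h1 h2 using hB
  refine ⟨fun y => y - T ⟨B y, h y⟩, fun y => ⟨?_, ?_, ?_⟩⟩
  · rw [selfAdj_graph hT]
    intro a b hab
    rw [inner_zero_right, inner_eq_zero_symm]
    apply h2
    rw [LinearPMap.mem_graph_iff] at hab
    obtain ⟨a', -, hb⟩ := hab
    exact ⟨a', hb⟩
  · rw [sub_sub_cancel]
    exact T.mem_graph ⟨B y, h y⟩
  · intro z hz
    apply h1
    rw [LinearPMap.mem_graph_iff] at hz
    obtain ⟨⟨a, ha⟩, rfl, hb⟩ := hz
    exact ⟨ha, hb⟩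

/-- On the range of `B = T†`, which is orthogonal to `ker T`, one has `T B = 1`. -/
lemma mem_graph_comp (hG : SelfAdj G) {B Q : X → X}
    (h : ∀ y, (Q y, 0) ∈ G ∧ (B y, y - Q y) ∈ G ∧ ∀ z, (z, 0) ∈ G → ⟪B y, z⟫_ℂ = 0) (y : X) :
    (B (B y), B y) ∈ G := by
  obtain ⟨h1, h2, -⟩ := h (B y)
  have h3 := (h y).2.2 _ h1
  have h4 := (hG _ _).1 h1 _ _ h2
  rw [inner_zero_right, inner_sub_left, h3, zero_sub, neg_eq_zero] at h4
  rw [inner_self_eq_zero.1 h4, sub_zero] at h2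
  exact h2

lemma isResolventAt_of_graph {T : X →ₗ.[ℂ] X} {l : ℂ} {R : X → X}
    (h : ∀ x, (R x, l • R x - x) ∈ T.graph) : IsResolventAt T l R := by
  intro x
  have h1 := h x
  rw [LinearPMap.mem_graph_iff] at h1
  obtain ⟨⟨a, ha⟩, h2, h3⟩ := h1
  simp only at h2
  subst h2
  refine ⟨ha, ?_⟩
  rw [h3, sub_sub_cancel]

/-! ### Limits of sequences of operators -/

/-- A uniform limit of convergent sequences converges. -/
lemma exists_tendsto_of_approx (q : ℕ → X)
    (h : ∀ ε > 0, ∃ r : ℕ → X, (∃ x, Tendsto r atTop (𝓝 x)) ∧ ∀ n, ‖r n - q n‖ ≤ ε) :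
    ∃ x, Tendsto q atTop (𝓝 x) := by
  apply cauchySeq_tendsto_of_complete
  rw [Metric.cauchySeq_iff]
  intro ε hε
  obtain ⟨r, ⟨x, hx⟩, hr⟩ := h (ε / 4) (by positivity)
  obtain ⟨N, hN⟩ := Metric.cauchySeq_iff.1 hx.cauchySeq (ε / 4) (by positivity)
  refine ⟨N, fun m hm n hn => ?_⟩
  have h1 := hN m hm n hn
  have h2 := hr m
  have h3 := hr n
  rw [← dist_eq_norm] at h2 h3
  have h4 := dist_triangle4_right (q m) (q n) (r m) (r n)
  have h5 := dist_triangle4 (q m) (r m) (r n) (q n)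
  rw [dist_comm (q m) (r m)] at h5
  linarith

/-- Under strong convergence of the resolvents at `i`, limits of points of the graphs `Gₙ` lie
in `G`. -/
lemma mem_of_tendsto {Gn : ℕ → Submodule ℂ (X × X)} (hGn : ∀ n, SelfAdj (Gn n))
    {R : X → X} {Rn : ℕ → X → X} (hR : ∀ x, (R x, im 1 • R x - x) ∈ G)
    (hRn : ∀ n x, (Rn n x, im 1 • Rn n x - x) ∈ Gn n)
    (hlim : ∀ x, Tendsto (fun n => Rn n x) atTop (𝓝 (R x)))
    {u v : ℕ → X} {x y : X} (huv : ∀ n, (u n, v n) ∈ Gn n)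
    (hu : Tendsto u atTop (𝓝 x)) (hv : Tendsto v atTop (𝓝 y)) : (x, y) ∈ G := by
  set z := im 1 • x - y with hz
  have hzn : Tendsto (fun n => ‖(im 1 • u n - v n) - z‖) atTop (𝓝 0) := by
    have := (((hu.const_smul (im 1)).sub hv).sub_const z).norm
    rwa [← hz, sub_self, norm_zero] at this
  have hd : Tendsto (fun n => u n - Rn n z) atTop (𝓝 0) := by
    refine squeeze_zero_norm (fun n => ?_) hzn
    have h1 := norm_fst_le (hGn n) ((Gn n).sub_mem (huv n) (hRn n z)) 1
    have e : im 1 • (u n - Rn n z) - (v n - (im 1 • Rn n z - z)) = (im 1 • u n - v n) - z := by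
      rw [smul_sub]; abel
    simp only at h1
    rwa [e, one_mul] at h1
  have h2 := hd.add (hlim z)
  simp only [sub_add_cancel, zero_add] at h2
  have h3 : x = R z := tendsto_nhds_unique hu h2
  have h4 := hR z
  rw [← h3, hz, sub_sub_cancel] at h4
  exact h4

end MPConv

/-! ### Strong convergence of the Moore–Penrose inverses -/

open MPConv in
/-- Under resolvent consistency, if `sup_n ‖Aₙ†‖ < ∞` then `R(A)` is
closed, `D(A†) = X`, `A†` is bounded (here: `A†` is realized as an everywhere-defined
continuous linear map `B`), and `Aₙ† y → A† y` in norm for every `y`. -/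
theorem mp_inverse_strong_convergence_of_uniform_bound
    (A : X →ₗ.[ℂ] X) (hA : IsSelfAdjoint A)
    (An : ℕ → X →ₗ.[ℂ] X) (hAn : ∀ n, IsSelfAdjoint (An n))
    (hRanClosed : ∀ n, IsClosed (pRange (An n)))
    (Bn : ℕ → X →L[ℂ] X) (hBn : ∀ n, IsMoorePenroseInv (An n) (Bn n))
    (hres : ResolventConsistent An A)
    (hbound : ∃ M : ℝ, ∀ n, ‖Bn n‖ ≤ M) :
    IsClosed (pRange A) ∧
      ∃ B : X →L[ℂ] X, IsMoorePenroseInv A (fun y => B y) ∧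
        ∀ y : X, Tendsto (fun n => Bn n y) atTop (𝓝 (B y)) := by
  obtain ⟨M, hM⟩ := hbound
  have hM0 : 0 ≤ M := (norm_nonneg _).trans (hM 0)
  have hG := selfAdj_graph hA
  have hGn := fun n => selfAdj_graph (hAn n)
  choose Qn hQ using fun n => exists_kernel_part (hAn n) (hBn n)
  have hBB := fun n => mem_graph_comp (hGn n) (hQ n)
  have hBle : ∀ n y, ‖Bn n y‖ ≤ M * ‖y‖ := fun n y => (Bn n).le_of_opNorm_le (hM n) y
  have hBBle : ∀ n y, ‖Bn n (Bn n y)‖ ≤ M * (M * ‖y‖) := fun n y =>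
    (hBle n _).trans (by gcongr; exact hBle n y)
  choose R hR using fun (s : {s : ℝ // 0 < s}) => exists_resolvent hG s.2
  choose Rn hRn using fun n (s : {s : ℝ // 0 < s}) => exists_resolvent (hGn n) s.2
  have hlim : ∀ s x, Tendsto (fun n => Rn n s x) atTop (𝓝 (R s x)) := fun s =>
    hres (im s) (by simp [im, s.2.ne']) (R s) (fun n => Rn n s)
      (isResolventAt_of_graph (hR s)) (fun n => isResolventAt_of_graph (hRn n s))
  have hQest : ∀ n (s : {s : ℝ // 0 < s}) y, ‖im (s : ℝ) • Rn n s y - Qn n y‖ ≤ s * (M * ‖y‖) := fun n (s : {s : ℝ // 0 < s}) y =>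
    (norm_smul_sub_le (hGn n) s.2 (hRn n s y) (hQ n y).1 (hQ n y).2.1).trans
      (mul_le_mul_of_nonneg_left (hBle n y) s.2.le)
  have hBest : ∀ n (s : {s : ℝ // 0 < s}) y, ‖Rn n s y - (im (s : ℝ))⁻¹ • Qn n y + Bn n y‖ ≤
      2 * s * (M * (M * ‖y‖)) := fun n (s : {s : ℝ // 0 < s}) y =>
    (norm_sub_add_le (hGn n) s.2 (hRn n s y) (hQ n y).1 (hQ n y).2.1 (hBB n y)).trans
      (mul_le_mul_of_nonneg_left (hBBle n y) (by linarith [s.2]))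
  -- a parameter `s` making an error of size `s * C` small
  have hsmall : ∀ C : ℝ, 0 ≤ C → ∀ ε > 0, ∃ s : {s : ℝ // 0 < s}, s * C ≤ ε := by
    intro C hC ε hε
    refine ⟨⟨ε / (C + 1), by positivity⟩, ?_⟩
    change ε / (C + 1) * C ≤ ε
    rw [div_mul_eq_mul_div, div_le_iff₀ (by positivity)]
    nlinarith
  have hQlim : ∀ y, ∃ p, Tendsto (fun n => Qn n y) atTop (𝓝 p) := by
    intro y
    refine exists_tendsto_of_approx _ fun ε hε => ?_
    obtain ⟨s, hs⟩ := hsmall (M * ‖y‖) (by positivity) ε hε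
    exact ⟨fun n => im (s : ℝ) • Rn n s y, ⟨_, (hlim s y).const_smul _⟩,
      fun n => (hQest n s y).trans hs⟩
  choose P hP using hQlim
  have hBlim : ∀ y, ∃ b, Tendsto (fun n => Bn n y) atTop (𝓝 b) := by
    intro y
    refine exists_tendsto_of_approx _ fun ε hε => ?_
    obtain ⟨s, hs⟩ := hsmall (2 * (M * (M * ‖y‖))) (by positivity) ε hε
    refine ⟨fun n => -(Rn n s y - (im (s : ℝ))⁻¹ • Qn n y),
      ⟨_, ((hlim s y).sub ((hP y).const_smul _)).neg⟩, fun n => ?_⟩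
    rw [← neg_add', norm_neg]
    refine (hBest n s y).trans ?_
    linarith
  choose B' hB' using hBlim
  let B : X →L[ℂ] X := continuousLinearMapOfTendsto Bn (tendsto_pi_nhds.2 hB')
  have hB : ∀ y, Tendsto (fun n => Bn n y) atTop (𝓝 (B y)) := hB'
  have hmem : ∀ {u v : ℕ → X} {x y : X}, (∀ n, (u n, v n) ∈ (An n).graph) →
      Tendsto u atTop (𝓝 x) → Tendsto v atTop (𝓝 y) → (x, y) ∈ A.graph :=
    fun huv hu hv => mem_of_tendsto hGn (hR ⟨1, one_pos⟩) (fun n => hRn n ⟨1, one_pos⟩)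
      (hlim ⟨1, one_pos⟩) huv hu hv
  have hBgr : ∀ y, (B y, y - P y) ∈ A.graph := fun y =>
    hmem (fun n => (hQ n y).2.1) (hB y) ((hP y).const_sub y)
  have hPgr : ∀ y, (P y, 0) ∈ A.graph := fun y =>
    hmem (fun n => (hQ n y).1) (hP y) tendsto_const_nhds
  have hPker : ∀ z, (z, 0) ∈ A.graph → P z = z := by
    intro z hz
    have hRz : ∀ s : {s : ℝ // 0 < s}, im (s : ℝ) • R s z = z := by
      intro s
      have h1 := A.graph.smul_mem (im (s : ℝ))⁻¹ hz
      have h2 : ((im (s : ℝ))⁻¹ • z, im (s : ℝ) • (im (s : ℝ))⁻¹ • z - z) ∈ A.graph := by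
        rw [smul_inv_smul₀ (im_ne s.2), sub_self]
        simpa using h1
      rw [resolvent_unique hG s.2 (hR s z) h2, smul_inv_smul₀ (im_ne s.2)]
    have h3 : ∀ s : {s : ℝ // 0 < s}, ‖z - P z‖ ≤ s * (M * ‖z‖) := by
      intro s
      have h4 := (((hlim s z).const_smul (im (s : ℝ))).sub (hP z)).norm
      rw [hRz] at h4
      exact le_of_tendsto' h4 fun n => hQest n s z
    have h5 : ‖z - P z‖ ≤ 0 := by
      refine le_of_forall_pos_le_add fun ε hε => ?_
      obtain ⟨s, hs⟩ := hsmall (M * ‖z‖) (by positivity) ε hε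
      rw [zero_add]
      exact (h3 s).trans hs
    exact (sub_eq_zero.1 (norm_le_zero_iff.1 h5)).symm
  have hBker : ∀ y z, (z, 0) ∈ A.graph → ⟪B y, z⟫_ℂ = 0 := by
    intro y z hz
    have h1 : Tendsto (fun n => ⟪Bn n y, Qn n z⟫_ℂ) atTop (𝓝 ⟪B y, P z⟫_ℂ) :=
      (hB y).inner (hP z)
    have h2 : (fun n => ⟪Bn n y, Qn n z⟫_ℂ) = fun _ => 0 :=
      funext fun n => (hQ n y).2.2 _ (hQ n z).1
    rw [h2, hPker z hz] at h1
    exact tendsto_nhds_unique h1 tendsto_const_nhds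
  have hPorth : ∀ y, ∀ w ∈ pRange A, ⟪P y, w⟫_ℂ = 0 := by
    rintro y w ⟨x, rfl⟩
    rw [inner_eq_zero_symm, (hG _ _).1 (hPgr y) _ _ (A.mem_graph x), inner_zero_right]
  have hrange : ∀ y, y - P y ∈ pRange A := fun y => by
    obtain ⟨x, -, hx⟩ := (LinearPMap.mem_graph_iff A).1 (hBgr y)
    exact ⟨x, hx⟩
  refine ⟨?_, B, ?_, hB⟩
  · refine isClosed_of_closure_subset fun y hy => ?_
    -- `P y` is orthogonal to `y` and to `y - P y`, hence to itself
    have h1 : ⟪P y, y⟫_ℂ = 0 := by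
      have hcl : IsClosed {w : X | ⟪P y, w⟫_ℂ = 0} :=
        isClosed_eq (by fun_prop) continuous_const
      exact closure_minimal (hPorth y) hcl hy
    have h2 := hPorth y _ (hrange y)
    rw [inner_sub_right, h1, zero_sub, neg_eq_zero] at h2
    have h3 := hrange y
    rwa [inner_self_eq_zero.1 h2, sub_zero] at h3
  · intro y
    obtain ⟨⟨x, hx⟩, h1, h2⟩ := (LinearPMap.mem_graph_iff A).1 (hBgr y)
    simp only at h1 h2
    subst h1
    refine ⟨hx, ?_, ?_⟩
    · rintro z ⟨hz, hz0⟩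
      exact hBker y z (by simpa [hz0] using A.mem_graph ⟨z, hz⟩)
    · intro w hw
      rw [h2, sub_sub_cancel]
      exact hPorth y w hw
end

section
/- Let (A_n) and A be (possibly unbounded) self-adjoint operators on a complex Hilbert space X. Then (A_n) converges to A in the strong resolvent sense if and only if (A_n) converges to A in the strong graph sense; that is, [for every λ ∈ ℂ \ ℝ and every x ∈ X, (λI − A_n)^{-1} x → (λI − A)^{-1} x in norm] if and only if s-lim_{n→∞} G(A_n) = G(A). -/
/-!
A self-adjoint operator `T` satisfies `|Im l| ‖x‖ ≤ ‖l x - T x‖` (`abs_im_mul_norm_le`), because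
`⟪x, T x⟫` is real. Hence `l - T` has closed range for `l = i`, and the orthogonal complement of
that range consists of eigenvectors of `T† = T` with eigenvalue `-i`, which the same bound kills.
So the resolvent at `i` exists (`exists_isResolventAt_I`).

Graph convergence implies resolvent convergence: given `x`, approximate `(R x, A (R x))` by
`(uₙ, vₙ) ∈ G(Aₙ)`. Then `l uₙ - vₙ → x`, and the bound applied to `Rₙ x - uₙ` yields
`Rₙ x - uₙ → 0`.

For the converse only `l = i` is needed. A point `(x, y)` of `G(A)` has `x = R w` for `w = i x - y`,
so it is the limit of `(Rₙ w, i Rₙ w - w) ∈ G(Aₙ)`. If instead `(xₙ, yₙ) ∈ G(Aₙ)` converges to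
`(x, y)`, then with the same `w` the bound gives `Rₙ w - xₙ → 0`, whence `x = R w` and
`y = i R w - w = A x`.
-/

open Filter Topology
open scoped InnerProductSpace

variable {X : Type*} [NormedAddCommGroup X] [InnerProductSpace ℂ X] [CompleteSpace X]

/-- Self-adjointness as an equality of the graph with its adjoint relation. -/
lemma IsSelfAdjoint.mem_graph_iff_inner {T : X →ₗ.[ℂ] X} (hT : IsSelfAdjoint T) (p : X × X) :
    p ∈ T.graph ↔ ∀ a b, (a, b) ∈ T.graph → ⟪b, p.1⟫_ℂ - ⟪a, p.2⟫_ℂ = 0 := by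
  have h := LinearPMap.adjoint_graph_eq_graph_adjoint hT.dense_domain
  rw [LinearPMap.isSelfAdjoint_def.mp hT] at h
  conv_lhs => rw [h]
  exact Submodule.mem_adjoint_iff _ _

lemma abs_im_mul_norm_le {T : X →ₗ.[ℂ] X} (hT : IsSelfAdjoint T) (l : ℂ) {x y : X}
    (h : (x, y) ∈ T.graph) : |l.im| * ‖x‖ ≤ ‖l • x - y‖ := by
  have hxy : ⟪y, x⟫_ℂ = ⟪x, y⟫_ℂ := sub_eq_zero.mp ((hT.mem_graph_iff_inner (x, y)).mp h x y h)
  have him : (⟪x, y⟫_ℂ).im = 0 := by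
    rw [← inner_conj_symm] at hxy
    have := congrArg Complex.im hxy
    rw [Complex.conj_im] at this
    linarith
  have key : (⟪x, l • x - y⟫_ℂ).im = l.im * ‖x‖ ^ 2 := by
    rw [inner_sub_right, inner_smul_right, inner_self_eq_norm_sq_to_K, Complex.sub_im, him]
    have : ((‖x‖ : ℂ)) ^ 2 = ((‖x‖ ^ 2 : ℝ) : ℂ) := by push_cast; rfl
    erw [this]
    rw [Complex.im_mul_ofReal, sub_zero]
  have h1 : |l.im| * ‖x‖ ^ 2 ≤ ‖x‖ * ‖l • x - y‖ := by
    calc |l.im| * ‖x‖ ^ 2 = |(⟪x, l • x - y⟫_ℂ).im| := by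
          rw [key, abs_mul, abs_of_nonneg (sq_nonneg ‖x‖)]
      _ ≤ ‖⟪x, l • x - y⟫_ℂ‖ := Complex.abs_im_le_norm _
      _ ≤ _ := norm_inner_le_norm _ _
  rcases (norm_nonneg x).eq_or_lt with h0 | h0
  · rw [← h0, mul_zero]; exact norm_nonneg _
  · refine le_of_mul_le_mul_left ?_ h0
    linarith [h1, sq ‖x‖, mul_left_comm ‖x‖ |l.im| ‖x‖, congrArg (|l.im| * ·) (sq ‖x‖)]

lemma isResolventAt_iff_graph (T : X →ₗ.[ℂ] X) (l : ℂ) (R : X → X) :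
    IsResolventAt T l R ↔ ∀ x, (R x, l • R x - x) ∈ T.graph := by
  refine forall_congr' fun x => ?_
  rw [LinearPMap.mem_graph_iff]
  constructor
  · rintro ⟨h, hx⟩
    exact ⟨⟨R x, h⟩, rfl, eq_sub_of_add_eq' (sub_eq_iff_eq_add.mp hx).symm⟩
  · rintro ⟨⟨a, ha⟩, rfl, h⟩
    exact ⟨ha, by rw [h]; simp⟩

/-- A self-adjoint operator has an everywhere-defined resolvent at `i`: the map
`(x, y) ↦ i x - y` on the graph has closed range with trivial orthogonal complement. -/
lemma exists_isResolventAt_I {T : X →ₗ.[ℂ] X} (hT : IsSelfAdjoint T) :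
    ∃ R : X → X, IsResolventAt T Complex.I R := by
  let F : X × X →L[ℂ] X :=
    Complex.I • ContinuousLinearMap.fst ℂ X X - ContinuousLinearMap.snd ℂ X X
  let f : T.graph →L[ℂ] X := F.comp T.graph.subtypeL
  have hf : ∀ p : T.graph, f p = Complex.I • (p : X × X).1 - (p : X × X).2 := fun p => rfl
  have : CompleteSpace T.graph := IsClosed.completeSpace_coe (hs := hT.isClosed)
  have hanti : AntilipschitzWith 2 f := by
    refine AddMonoidHomClass.antilipschitz_of_bound f fun p => ?_
    have h1 := abs_im_mul_norm_le hT Complex.I (x := (p : X × X).1) (y := (p : X × X).2) p.2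
    rw [Complex.I_im, abs_one, one_mul, ← hf] at h1
    have h2 : ‖(p : X × X).2‖ ≤ ‖(p : X × X).1‖ + ‖f p‖ := by
      calc ‖(p : X × X).2‖ = ‖Complex.I • (p : X × X).1 - f p‖ := by rw [hf]; simp
        _ ≤ ‖Complex.I • (p : X × X).1‖ + ‖f p‖ := norm_sub_le _ _
        _ = _ := by rw [norm_smul, Complex.norm_I, one_mul]
    rw [Submodule.coe_norm, Prod.norm_def]
    have h3 := norm_nonneg (f p)
    push_cast
    exact max_le (by linarith) (by linarith)
  have hclosed : IsClosed (f.range : Set X) := by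
    rw [LinearMap.coe_range]
    exact hanti.isClosed_range f.uniformContinuous
  have : CompleteSpace f.range := IsClosed.completeSpace_coe (hs := hclosed)
  have htop : f.range = ⊤ := by
    rw [← Submodule.orthogonal_eq_bot_iff, Submodule.eq_bot_iff]
    intro z hz
    rw [Submodule.mem_orthogonal] at hz
    -- `z` is orthogonal to the range of `i - T`, hence `T† z = -i z`.
    have hzg : (z, (-Complex.I) • z) ∈ T.graph := by
      rw [hT.mem_graph_iff_inner]
      intro a b hab
      have := hz _ ⟨⟨(a, b), hab⟩, rfl⟩
      erw [hf] at this
      simp only [inner_sub_left, inner_smul_left, Complex.conj_I] at this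
      simp only [inner_smul_right]
      linear_combination -this
    have := abs_im_mul_norm_le hT (-Complex.I) hzg
    simpa using this
  have hsurj : ∀ x, ∃ p : T.graph, f p = x := fun x => by
    have : x ∈ f.range := htop ▸ Submodule.mem_top
    exact this
  choose g hg using hsurj
  refine ⟨fun x => (g x : X × X).1, (isResolventAt_iff_graph _ _ _).mpr fun x => ?_⟩
  have : Complex.I • (g x : X × X).1 - x = (g x : X × X).2 := by
    nth_rw 2 [← hg x]
    rw [hf]; simp
  rw [this]
  exact (g x).2

/-- If points of the graphs of `Tₙ` are such that `l xₙ - yₙ → w`, then `xₙ` is asymptotically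
the resolvent of `Tₙ` at `l` applied to `w`, by the uniform bound `|Im l|⁻¹` on the resolvents. -/
lemma tendsto_resolvent_sub {Tn : ℕ → X →ₗ.[ℂ] X} (hTn : ∀ n, IsSelfAdjoint (Tn n)) {l : ℂ}
    (hl : l.im ≠ 0) {Rn : ℕ → X → X} (hRn : ∀ n, IsResolventAt (Tn n) l (Rn n))
    {x y : ℕ → X} (hxy : ∀ n, (x n, y n) ∈ (Tn n).graph) {w : X}
    (hw : Tendsto (fun n => l • x n - y n) atTop (𝓝 w)) :
    Tendsto (fun n => Rn n w - x n) atTop (𝓝 0) := by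
  have hpos : 0 < |l.im| := abs_pos.mpr hl
  have h0 : Tendsto (fun n => |l.im|⁻¹ * ‖w - (l • x n - y n)‖) atTop (𝓝 0) := by
    simpa using ((tendsto_const_nhds (x := w)).sub hw).norm.const_mul |l.im|⁻¹
  refine squeeze_zero_norm (fun n => ?_) h0
  have hg := (Tn n).graph.sub_mem ((isResolventAt_iff_graph _ _ _).mp (hRn n) w) (hxy n)
  have hb := abs_im_mul_norm_le (hTn n) l hg
  rw [le_inv_mul_iff₀ hpos]
  refine hb.trans_eq (congrArg norm ?_)
  module

/-- For self-adjoint operators `Aₙ`, `A`, strong resolvent convergence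
is equivalent to strong graph convergence: `s-lim G(Aₙ) = G(A)`. -/
theorem strong_resolvent_convergence_iff_strong_graph_convergence
    (A : X →ₗ.[ℂ] X) (hA : IsSelfAdjoint A)
    (An : ℕ → X →ₗ.[ℂ] X) (hAn : ∀ n, IsSelfAdjoint (An n)) :
    ResolventConsistent An A ↔
      sLim (fun n => ((An n).graph : Set (X × X))) = (A.graph : Set (X × X)) := by
  constructor
  · intro h
    obtain ⟨R, hR⟩ := exists_isResolventAt_I hA
    choose Rn hRn using fun n => exists_isResolventAt_I (hAn n)
    have hlim := h Complex.I (by simp) R Rn hR hRn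
    have hRg := (isResolventAt_iff_graph _ _ _).mp hR
    ext ⟨x, y⟩
    constructor
    · rintro ⟨u, hu, hux⟩
      have h1 : Tendsto (fun n => (u n).1) atTop (𝓝 x) := (continuous_fst.tendsto _).comp hux
      have h2 : Tendsto (fun n => (u n).2) atTop (𝓝 y) := (continuous_snd.tendsto _).comp hux
      have h3 := tendsto_resolvent_sub hAn (l := Complex.I) (by simp) hRn
        (x := fun n => (u n).1) (y := fun n => (u n).2) hu ((h1.const_smul Complex.I).sub h2)
      have h4 : R (Complex.I • x - y) = x :=
        sub_eq_zero.mp (tendsto_nhds_unique ((hlim _).sub h1) h3)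
      have h5 := hRg (Complex.I • x - y)
      rw [h4, sub_sub_cancel] at h5
      exact h5
    · intro hxy
      -- Injectivity of `i - A` identifies `x` with `R w` for `w = i x - y`.
      have hx : R (Complex.I • x - y) = x := by
        have hb := abs_im_mul_norm_le hA Complex.I
          (A.graph.sub_mem (hRg (Complex.I • x - y)) hxy)
        rw [Complex.I_im, abs_one, one_mul] at hb
        refine sub_eq_zero.mp (norm_le_zero_iff.mp (hb.trans (le_of_eq ?_)))
        rw [norm_eq_zero]
        module
      refine ⟨fun n => (Rn n (Complex.I • x - y),
        Complex.I • Rn n (Complex.I • x - y) - (Complex.I • x - y)),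
        fun n => (isResolventAt_iff_graph _ _ _).mp (hRn n) _, ?_⟩
      have h1 := hlim (Complex.I • x - y)
      rw [hx] at h1
      have h2 := (h1.const_smul Complex.I).sub_const (Complex.I • x - y)
      rw [sub_sub_cancel] at h2
      exact h1.prodMk_nhds h2
  · intro h l hl R Rn hR hRn x
    have hx : (R x, l • R x - x) ∈ sLim (fun n => ((An n).graph : Set (X × X))) := by
      rw [h]
      exact (isResolventAt_iff_graph _ _ _).mp hR x
    obtain ⟨u, hu, hux⟩ := hx
    have h1 : Tendsto (fun n => (u n).1) atTop (𝓝 (R x)) := (continuous_fst.tendsto _).comp hux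
    have h2 : Tendsto (fun n => (u n).2) atTop (𝓝 (l • R x - x)) :=
      (continuous_snd.tendsto _).comp hux
    have hw : Tendsto (fun n => l • (u n).1 - (u n).2) atTop (𝓝 x) := by
      simpa using (h1.const_smul l).sub h2
    simpa using (tendsto_resolvent_sub hAn hl hRn hu hw).add h1
end

section
/- Let (A_n) and A be (possibly unbounded) self-adjoint operators on a complex Hilbert space X, and suppose that for every λ ∈ ℂ \ ℝ and every x ∈ X, (λI − A_n)^{-1} x → (λI − A)^{-1} x in norm. Then s-lim_{n→∞} G(A_n) = G(A); in particular, for every u ∈ D(A) the vectors u_n := (iI − A_n)^{-1}(iI − A)u ∈ D(A_n) satisfy u_n → u and A_n u_n → Au in norm, and conversely every pair (u, v) that is a norm limit of pairs (u_n, A_n u_n) with u_n ∈ D(A_n) satisfies u ∈ D(A) and v = Au. -/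
open Filter Topology
open scoped InnerProductSpace

variable {X : Type*} [NormedAddCommGroup X] [InnerProductSpace ℂ X] [CompleteSpace X]

/-!
The basic estimate for a self-adjoint `T` is `‖i x - T x‖² = ‖x‖² + ‖T x‖²`, which holds because
`⟪x, T x⟫` is real. It makes `i - T` injective with contractive inverse and, since the graph of `T`
is closed, makes the range of `i - T` closed; a vector orthogonal to this range lies in
`D(T†) = D(T)` and must vanish, so `i - T` is onto and the resolvents at `i` exist.

If `u ∈ D(A)` and `x = i u - A u`, then `uₙ = Rₙ x → R x = u` and `Aₙ uₙ = i uₙ - x → i u - x = A u`.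
Conversely, if `uₙ → u` and `Aₙ uₙ → v`, then `uₙ` is within `‖(i uₙ - Aₙ uₙ) - (i u - v)‖` of
`Rₙ (i u - v)`, so `u = R (i u - v)`, which says that `u ∈ D(A)` and `A u = v`. Only the convergence
of the resolvents at the single point `i` is needed.
-/

lemma isFormalAdjoint_self {T : X →ₗ.[ℂ] X} (hT : IsSelfAdjoint T) : T.IsFormalAdjoint T := by
  have h := T.adjoint_isFormalAdjoint hT.dense_domain
  rwa [LinearPMap.isSelfAdjoint_def.mp hT] at h

lemma inner_apply_im {T : X →ₗ.[ℂ] X} (hT : IsSelfAdjoint T) (x : T.domain) :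
    (⟪(x : X), T x⟫_ℂ).im = 0 := by
  have h : ⟪T x, (x : X)⟫_ℂ = ⟪(x : X), T x⟫_ℂ := isFormalAdjoint_self hT x x
  rw [← inner_conj_symm] at h
  exact Complex.conj_eq_iff_im.mp h

lemma norm_sq_I_smul_sub {T : X →ₗ.[ℂ] X} (hT : IsSelfAdjoint T) (x : T.domain) :
    ‖Complex.I • (x : X) - T x‖ ^ 2 = ‖(x : X)‖ ^ 2 + ‖T x‖ ^ 2 := by
  have h := norm_sub_sq (𝕜 := ℂ) (Complex.I • (x : X)) (T x)
  have h0 := inner_apply_im hT x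
  rw [h, inner_smul_left, norm_smul]
  simp [h0]

lemma norm_le_norm_I_smul_sub {T : X →ₗ.[ℂ] X} (hT : IsSelfAdjoint T) (x : T.domain) :
    ‖(x : X)‖ ≤ ‖Complex.I • (x : X) - T x‖ := by
  have h := norm_sq_I_smul_sub hT x
  exact le_of_sq_le_sq (by nlinarith [sq_nonneg ‖T x‖]) (norm_nonneg _)

/-- The map `(x, T x) ↦ i x - T x` on the graph of `T`, whose range is the range of `i - T`. -/
noncomputable def graphISub (T : X →ₗ.[ℂ] X) : T.graph →L[ℂ] X :=
  (Complex.I • ContinuousLinearMap.fst ℂ X X - ContinuousLinearMap.snd ℂ X X).comp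
    T.graph.subtypeL

lemma isClosed_range_graphISub {T : X →ₗ.[ℂ] X} (hT : IsSelfAdjoint T) :
    IsClosed (Set.range (graphISub T)) := by
  have hc : IsClosed (T.graph : Set (X × X)) := hT.isClosed
  have : CompleteSpace T.graph := hc.completeSpace_coe
  refine AntilipschitzWith.isClosed_range (K := 1) ?_ (graphISub T).uniformContinuous
  refine AddMonoidHomClass.antilipschitz_of_bound _ ?_
  rintro ⟨⟨x, y⟩, hxy⟩
  obtain ⟨z, rfl, rfl⟩ := (LinearPMap.mem_graph_iff T).mp hxy
  have h := norm_sq_I_smul_sub hT z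
  have h2 : ‖T z‖ ≤ ‖Complex.I • (z : X) - T z‖ :=
    le_of_sq_le_sq (by nlinarith [sq_nonneg ‖(z : X)‖]) (norm_nonneg _)
  simpa [graphISub] using max_le (norm_le_norm_I_smul_sub hT z) h2

lemma exists_I_smul_sub_eq {T : X →ₗ.[ℂ] X} (hT : IsSelfAdjoint T) (y : X) :
    ∃ x : T.domain, Complex.I • (x : X) - T x = y := by
  let S : Submodule ℂ X := LinearMap.range (graphISub T : T.graph →ₗ[ℂ] X)
  have hS : IsClosed (S : Set X) := by
    rw [LinearMap.coe_range]
    exact isClosed_range_graphISub hT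
  have : CompleteSpace S := hS.completeSpace_coe
  have hmem (x : T.domain) : Complex.I • (x : X) - T x ∈ S :=
    ⟨⟨((x : X), T x), T.mem_graph x⟩, by simp [graphISub]⟩
  have htop : S = ⊤ := by
    rw [← Submodule.orthogonal_eq_bot_iff, Submodule.eq_bot_iff]
    intro w hw
    have hort (x : T.domain) : ⟪w, Complex.I • (x : X) - T x⟫_ℂ = 0 :=
      (Submodule.mem_orthogonal' S w).mp hw _ (hmem x)
    have hwd : w ∈ T.domain := by
      rw [← LinearPMap.isSelfAdjoint_def.mp hT]
      refine LinearPMap.mem_adjoint_domain_of_exists _ ⟨-Complex.I • w, fun x => ?_⟩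
      have := hort x
      rw [inner_sub_right, sub_eq_zero, inner_smul_right] at this
      rw [← this, inner_smul_left]
      simp
    -- Testing orthogonality on `w` itself gives `i ‖w‖² = ⟪w, T w⟫ ∈ ℝ`.
    have h := hort ⟨w, hwd⟩
    have him := inner_apply_im hT ⟨w, hwd⟩
    rw [inner_sub_right, sub_eq_zero, inner_smul_right] at h
    have h' := congrArg Complex.im h
    rw [him, Complex.I_mul_im] at h'
    have hnorm : ‖w‖ ^ 2 = 0 := (inner_self_eq_norm_sq (𝕜 := ℂ) w).symm.trans h'
    exact norm_eq_zero.mp (pow_eq_zero_iff two_ne_zero |>.mp hnorm)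
  have hy : y ∈ S := htop ▸ Submodule.mem_top
  obtain ⟨⟨⟨a, b⟩, hab⟩, rfl⟩ := hy
  obtain ⟨z, rfl, rfl⟩ := (LinearPMap.mem_graph_iff T).mp hab
  exact ⟨z, by simp [graphISub]⟩

/-- With `y = i z - T z` this says both that `R` inverts `i - T` on the left and that `R` is
a contraction. -/
lemma IsResolventAt.norm_sub_le {T : X →ₗ.[ℂ] X} (hT : IsSelfAdjoint T) {R : X → X}
    (hR : IsResolventAt T Complex.I R) (z : T.domain) (y : X) :
    ‖(z : X) - R y‖ ≤ ‖(Complex.I • (z : X) - T z) - y‖ := by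
  obtain ⟨h, hy⟩ := hR y
  have := norm_le_norm_I_smul_sub hT (z - ⟨R y, h⟩)
  rw [LinearPMap.map_sub] at this
  refine this.trans_eq (congrArg _ ?_)
  conv_rhs => rw [← hy]
  simp only [Submodule.coe_sub, smul_sub]
  abel

lemma IsResolventAt.left_inv {T : X →ₗ.[ℂ] X} (hT : IsSelfAdjoint T) {R : X → X}
    (hR : IsResolventAt T Complex.I R) (z : T.domain) :
    R (Complex.I • (z : X) - T z) = z := by
  have := hR.norm_sub_le hT z (Complex.I • (z : X) - T z)
  rw [sub_self, norm_zero, norm_le_zero_iff, sub_eq_zero] at this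
  exact this.symm

/-- Strong resolvent convergence of self-adjoint operators implies strong
graph convergence `s-lim G(Aₙ) = G(A)`; in particular, for `u ∈ D(A)` the vectors
`uₙ := (iI - Aₙ)⁻¹ (iI - A) u ∈ D(Aₙ)` satisfy `uₙ → u` and `Aₙ uₙ → A u`, and conversely
every norm limit `(u, v)` of pairs `(uₙ, Aₙ uₙ)` with `uₙ ∈ D(Aₙ)` satisfies `u ∈ D(A)`
and `v = A u`. -/
theorem strong_graph_convergence_of_strong_resolvent_convergence
    (A : X →ₗ.[ℂ] X) (hA : IsSelfAdjoint A)
    (An : ℕ → X →ₗ.[ℂ] X) (hAn : ∀ n, IsSelfAdjoint (An n))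
    (hres : ResolventConsistent An A) :
    sLim (fun n => ((An n).graph : Set (X × X))) = (A.graph : Set (X × X)) ∧
      (∀ (Rn : ℕ → X → X), (∀ n, IsResolventAt (An n) Complex.I (Rn n)) →
        ∀ (u : X) (hu : u ∈ A.domain),
          (∀ n, Rn n (Complex.I • u - A ⟨u, hu⟩) ∈ (An n).domain) ∧
          Tendsto (fun n => Rn n (Complex.I • u - A ⟨u, hu⟩)) atTop (𝓝 u) ∧
          (∀ v : ℕ → X,
            (∀ n, ∃ h : Rn n (Complex.I • u - A ⟨u, hu⟩) ∈ (An n).domain,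
              v n = An n ⟨Rn n (Complex.I • u - A ⟨u, hu⟩), h⟩) →
            Tendsto v atTop (𝓝 (A ⟨u, hu⟩)))) ∧
      (∀ u v : X, (u, v) ∈ sLim (fun n => ((An n).graph : Set (X × X))) →
        ∃ h : u ∈ A.domain, A ⟨u, h⟩ = v) := by
  obtain ⟨R, hR⟩ := exists_isResolventAt_I hA
  have hconv (Rn : ℕ → X → X) (hRn : ∀ n, IsResolventAt (An n) Complex.I (Rn n)) (x : X) :
      Tendsto (fun n => Rn n x) atTop (𝓝 (R x)) :=
    hres Complex.I (by simp) R Rn hR hRn x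
  have key1 : ∀ (Rn : ℕ → X → X), (∀ n, IsResolventAt (An n) Complex.I (Rn n)) →
        ∀ (u : X) (hu : u ∈ A.domain),
          (∀ n, Rn n (Complex.I • u - A ⟨u, hu⟩) ∈ (An n).domain) ∧
          Tendsto (fun n => Rn n (Complex.I • u - A ⟨u, hu⟩)) atTop (𝓝 u) ∧
          (∀ v : ℕ → X,
            (∀ n, ∃ h : Rn n (Complex.I • u - A ⟨u, hu⟩) ∈ (An n).domain,
              v n = An n ⟨Rn n (Complex.I • u - A ⟨u, hu⟩), h⟩) →
            Tendsto v atTop (𝓝 (A ⟨u, hu⟩))) := by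
    intro Rn hRn u hu
    have ht := hconv Rn hRn (Complex.I • u - A ⟨u, hu⟩)
    rw [hR.left_inv hA ⟨u, hu⟩] at ht
    refine ⟨fun n => (hRn n _).1, ht, fun v hv => ?_⟩
    have hv' : v = fun n => Complex.I • Rn n (Complex.I • u - A ⟨u, hu⟩)
        - (Complex.I • u - A ⟨u, hu⟩) := by
      funext n
      obtain ⟨h, e⟩ := hv n
      obtain ⟨h', e'⟩ := hRn n (Complex.I • u - A ⟨u, hu⟩)
      rw [e, eq_sub_iff_add_eq, ← eq_sub_iff_add_eq']
      exact e'.symm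
    rw [hv']
    simpa using (ht.const_smul Complex.I).sub_const (Complex.I • u - A ⟨u, hu⟩)
  choose Rn hRn using fun n => exists_isResolventAt_I (hAn n)
  have key2 : ∀ u v : X, (u, v) ∈ sLim (fun n => ((An n).graph : Set (X × X))) →
        ∃ h : u ∈ A.domain, A ⟨u, h⟩ = v := by
    rintro u v ⟨p, hp, hlim⟩
    have h1 : Tendsto (fun n => (p n).1) atTop (𝓝 u) := (continuous_fst.tendsto _).comp hlim
    have h2 : Tendsto (fun n => (p n).2) atTop (𝓝 v) := (continuous_snd.tendsto _).comp hlim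
    have hle (n : ℕ) : ‖(p n).1 - Rn n (Complex.I • u - v)‖
        ≤ ‖(Complex.I • (p n).1 - (p n).2) - (Complex.I • u - v)‖ := by
      obtain ⟨z, hz1, hz2⟩ := (LinearPMap.mem_graph_iff (An n)).mp (hp n)
      rw [← hz1, ← hz2]
      exact (hRn n).norm_sub_le (hAn n) z _
    have h3 : Tendsto (fun n => ‖(Complex.I • (p n).1 - (p n).2) - (Complex.I • u - v)‖)
        atTop (𝓝 0) := by
      simpa using (((h1.const_smul Complex.I).sub h2).sub_const (Complex.I • u - v)).norm
    have h4 := squeeze_zero_norm hle h3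
    have h5 := h1.sub (hconv Rn hRn (Complex.I • u - v))
    have hu : u = R (Complex.I • u - v) := sub_eq_zero.mp (tendsto_nhds_unique h5 h4)
    obtain ⟨h, e⟩ := hR (Complex.I • u - v)
    have hz : ∃ z : A.domain, (z : X) = u ∧ Complex.I • (z : X) - A z = Complex.I • u - v :=
      ⟨⟨_, h⟩, hu.symm, e⟩
    obtain ⟨z, rfl, hz⟩ := hz
    exact ⟨z.2, sub_right_injective hz⟩
  refine ⟨Set.Subset.antisymm ?_ ?_, key1, key2⟩
  · rintro ⟨u, v⟩ huv
    obtain ⟨h, rfl⟩ := key2 u v huv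
    exact A.mem_graph ⟨u, h⟩
  · rintro ⟨u, v⟩ huv
    obtain ⟨z, rfl, rfl⟩ := (LinearPMap.mem_graph_iff A).mp huv
    obtain ⟨hd, ht, hv⟩ := key1 Rn hRn z z.2
    exact ⟨fun n => (Rn n _, An n ⟨_, hd n⟩), fun n => (An n).mem_graph ⟨_, hd n⟩,
      ht.prodMk_nhds (hv _ fun n => ⟨hd n, rfl⟩)⟩
end

section
/- Let (A_n) and A be (possibly unbounded) self-adjoint operators on a complex Hilbert space X, and suppose s-lim_{n→∞} G(A_n) = G(A). Then for every λ ∈ ℂ \ ℝ and every x ∈ X one has (λI − A_n)^{-1} x → (λI − A)^{-1} x in norm; in particular (iI − A_n)^{-1} y → (iI − A)^{-1} y for every y ∈ X. -/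
/-!
A self-adjoint operator `T` satisfies `|Im l| ‖u‖ ≤ ‖l u - T u‖` on its domain, because
`⟪u, T u⟫` is real (`norm_le_of_isSelfAdjoint`). Given `x`, the point `(R x, A (R x))` of `G(A)` is
by hypothesis a limit of points `(aₙ, Aₙ aₙ)`. Then `l aₙ - Aₙ aₙ → l R x - A (R x) = x`, and the
bound applied to `Rₙ x - aₙ`, whose image under `l - Aₙ` is `x - (l aₙ - Aₙ aₙ)`, gives
`Rₙ x - aₙ → 0`, while `aₙ → R x`.
-/

open Filter Topology
open scoped InnerProductSpace

variable {X : Type*} [NormedAddCommGroup X] [InnerProductSpace ℂ X] [CompleteSpace X]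

/-- The a priori resolvent bound, which comes from taking the imaginary part of
`⟪u, l u - T u⟫ = l ‖u‖² - ⟪u, T u⟫`. -/
lemma norm_le_of_isSelfAdjoint {T : X →ₗ.[ℂ] X} (hT : IsSelfAdjoint T) (l : ℂ) (u : T.domain) :
    |l.im| * ‖(u : X)‖ ≤ ‖l • (u : X) - T u‖ := by
  have hsym : ⟪T u, (u : X)⟫_ℂ = ⟪(u : X), T u⟫_ℂ := by
    have h := LinearPMap.adjoint_isFormalAdjoint hT.dense_domain
    rw [LinearPMap.isSelfAdjoint_def.mp hT] at h
    exact h u u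
  have hreal : (⟪(u : X), T u⟫_ℂ).im = 0 := by
    rw [← Complex.conj_eq_iff_im, inner_conj_symm, hsym]
  have him : (⟪(u : X), l • (u : X) - T u⟫_ℂ).im = l.im * (‖(u : X)‖ * ‖(u : X)‖) := by
    rw [inner_sub_right, inner_smul_right, inner_self_eq_norm_sq_to_K, Complex.sub_im, hreal]
    simp [← Complex.ofReal_pow, pow_two]
  have hle : |l.im| * (‖(u : X)‖ * ‖(u : X)‖) ≤ ‖(u : X)‖ * ‖l • (u : X) - T u‖ := by
    calc |l.im| * (‖(u : X)‖ * ‖(u : X)‖)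
        = |(⟪(u : X), l • (u : X) - T u⟫_ℂ).im| := by
          rw [him, abs_mul, abs_of_nonneg (mul_self_nonneg ‖(u : X)‖)]
      _ ≤ ‖⟪(u : X), l • (u : X) - T u⟫_ℂ‖ := Complex.abs_im_le_norm _
      _ ≤ _ := norm_inner_le_norm _ _
  rcases (norm_nonneg (u : X)).eq_or_lt with h0 | hpos
  · rw [← h0, mul_zero]
    exact norm_nonneg _
  · refine le_of_mul_le_mul_left ?_ hpos
    linarith

lemma resolventConsistent_of_graph_subset_sLim
    {A : X →ₗ.[ℂ] X} {An : ℕ → X →ₗ.[ℂ] X} (hAn : ∀ n, IsSelfAdjoint (An n))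
    (hgraph : (A.graph : Set (X × X)) ⊆ sLim (fun n => ((An n).graph : Set (X × X)))) :
    ResolventConsistent An A := by
  intro l hl R Rn hR hRn x
  obtain ⟨hRx, hRx_eq⟩ := hR x
  obtain ⟨u, hu, hlim⟩ := hgraph (A.mem_graph ⟨R x, hRx⟩)
  have hfst : Tendsto (fun n => (u n).1) atTop (𝓝 (R x)) :=
    (continuous_fst.tendsto _).comp hlim
  have hsnd : Tendsto (fun n => (u n).2) atTop (𝓝 (A ⟨R x, hRx⟩)) :=
    (continuous_snd.tendsto _).comp hlim
  have himg : Tendsto (fun n => |l.im|⁻¹ * ‖x - (l • (u n).1 - (u n).2)‖) atTop (𝓝 0) := by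
    have h := ((tendsto_const_nhds (x := x)).sub ((hfst.const_smul l).sub hsnd)).norm.const_mul
      |l.im|⁻¹
    rwa [hRx_eq, sub_self, norm_zero, mul_zero] at h
  have hbound (n : ℕ) : ‖Rn n x - (u n).1‖ ≤ |l.im|⁻¹ * ‖x - (l • (u n).1 - (u n).2)‖ := by
    obtain ⟨hd, hd_eq⟩ := hRn n x
    obtain ⟨a, ha1, ha2⟩ := (LinearPMap.mem_graph_iff _).mp (hu n)
    have hb := norm_le_of_isSelfAdjoint (hAn n) l (⟨Rn n x, hd⟩ - a)
    have hcalc : l • (((⟨Rn n x, hd⟩ - a : (An n).domain)) : X) - An n (⟨Rn n x, hd⟩ - a)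
        = x - (l • (u n).1 - (u n).2) := by
      rw [LinearPMap.map_sub, ← ha1, ← ha2, Submodule.coe_sub, smul_sub]
      nth_rewrite 3 [← hd_eq]
      abel
    rw [hcalc, Submodule.coe_sub, ha1] at hb
    rwa [le_inv_mul_iff₀ (abs_pos.mpr hl)]
  have hdiff : Tendsto (fun n => Rn n x - (u n).1) atTop (𝓝 0) :=
    squeeze_zero_norm hbound himg
  simpa using hdiff.add hfst

/-- If the self-adjoint operators `Aₙ` converge to the self-adjoint
operator `A` in the strong graph sense (`s-lim G(Aₙ) = G(A)`), then they converge in the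
strong resolvent sense: for every nonreal `l` and every `x`,
`(l I - Aₙ)⁻¹ x → (l I - A)⁻¹ x` in norm; in particular this holds at `l = i`. -/
theorem strong_resolvent_convergence_of_strong_graph_convergence
    (A : X →ₗ.[ℂ] X) (hA : IsSelfAdjoint A)
    (An : ℕ → X →ₗ.[ℂ] X) (hAn : ∀ n, IsSelfAdjoint (An n))
    (hgraph : sLim (fun n => ((An n).graph : Set (X × X))) = (A.graph : Set (X × X))) :
    ResolventConsistent An A ∧
      (∀ (R : X → X) (Rn : ℕ → X → X),
        IsResolventAt A Complex.I R → (∀ n, IsResolventAt (An n) Complex.I (Rn n)) →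
        ∀ y : X, Tendsto (fun n => Rn n y) atTop (𝓝 (R y))) := by
  have h := resolventConsistent_of_graph_subset_sLim hAn hgraph.ge
  exact ⟨h, h Complex.I (by simp)⟩
end

section
/- Let X be a complex Hilbert space and let A, A_n ∈ B(X) (n ∈ ℕ) be bounded self-adjoint operators such that every range R(A_n) is closed and A_n x → A x in norm for every x ∈ X. Then the following are equivalent: (i) D(A†) = X (equivalently, R(A) is closed) and A_n† y → A† y in norm for every y ∈ X; (ii) sup_n ‖A_n†‖ < +∞. -/
/-!
If `Bₙ y` converges for every `y`, the uniform boundedness principle bounds `‖Bₙ‖`.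

Conversely, suppose `‖Bₙ‖ ≤ M`. A self-adjoint `T` with Moore–Penrose inverse `B` satisfies
`B T² = T` and `B = B² T` (`mp_apply_sq`, `mp_eq_sq_apply`). The first identity gives
`‖Aₙ x‖ ≤ M ‖Aₙ² x‖`, hence `‖A x‖ ≤ M ‖A² x‖` in the limit. So `A` is bounded below on
`cl R(A) = N(A)ᗮ`, and `R(A)` is closed (`isClosed_range_of_bound`). Therefore every `y` can be
written `y = A² v + z` with `A z = 0` (`exists_sq_add_ker`), and `A† y = A v`. Finally
`Bₙ y = Bₙ (A² v - Aₙ² v) + Aₙ v + Bₙ² Aₙ z`, where the outer terms tend to `0` and `Aₙ v → A v`.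
-/

open Filter Topology
open scoped InnerProductSpace

variable {X : Type*} [NormedAddCommGroup X] [InnerProductSpace ℂ X] [CompleteSpace X]

/-- `B` is the Moore–Penrose inverse of the (everywhere-defined) bounded operator `T`:
for every `y`, `B y ⟂ N(T)` and `T (B y) = P_{cl R(T)} y`, the latter being expressed by
`T (B y) ∈ R(T)` together with `y - T (B y) ⟂ R(T)`.  The existence of such an
everywhere-defined `B` encodes `D(T†) = X`. -/
def IsMoorePenroseInvB (T : X →L[ℂ] X) (B : X → X) : Prop :=
  ∀ y : X,
    (∀ z : X, T z = 0 → ⟪B y, z⟫_ℂ = 0) ∧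
    (∀ w : X, ⟪y - T (B y), T w⟫_ℂ = 0)

lemma selfAdjoint_inner {T : X →L[ℂ] X} (hT : IsSelfAdjoint T) (x y : X) :
    ⟪T x, y⟫_ℂ = ⟪x, T y⟫_ℂ :=
  hT.isSymmetric x y

/-- `T` is injective on `N(T)ᗮ`, which contains all values of a Moore–Penrose inverse of `T`. -/
lemma eq_of_perp_ker {T : X →L[ℂ] X} {a b : X}
    (ha : ∀ z, T z = 0 → ⟪a, z⟫_ℂ = 0) (hb : ∀ z, T z = 0 → ⟪b, z⟫_ℂ = 0)
    (h : T a = T b) : a = b := by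
  have h0 : T (a - b) = 0 := by rw [map_sub, h, sub_self]
  rw [← sub_eq_zero, ← inner_self_eq_zero (𝕜 := ℂ), inner_sub_left, ha _ h0, hb _ h0, sub_self]

lemma mp_mul_mul {T : X →L[ℂ] X} {B : X → X} (hB : IsMoorePenroseInvB T B) (x : X) :
    T (B (T x)) = T x := by
  have h := (hB (T x)).2 (x - B (T x))
  rw [map_sub, inner_self_eq_zero, sub_eq_zero] at h
  exact h.symm

lemma mp_apply_sq {T : X →L[ℂ] X} (hT : IsSelfAdjoint T) {B : X → X}
    (hB : IsMoorePenroseInvB T B) (x : X) : B (T (T x)) = T x := by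
  refine eq_of_perp_ker (T := T) (hB _).1 (fun z hz => ?_) (mp_mul_mul hB _)
  rw [selfAdjoint_inner hT, hz, inner_zero_right]

lemma mp_eq_sq_apply {T : X →L[ℂ] X} (hT : IsSelfAdjoint T) {B : X → X}
    (hB : IsMoorePenroseInvB T B) (z : X) : B z = B (B (T z)) := by
  refine eq_of_perp_ker (T := T) (hB _).1 (hB _).1 ?_
  -- Both sides lie in `R(T)`, so it suffices to compare their inner products with `T w`.
  have key : ∀ w, ⟪T (B z) - T (B (B (T z))), T w⟫_ℂ = 0 := by
    intro w
    have h1 := (hB z).2 w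
    have h2 := (hB (B (T z))).2 w
    have h3 : ⟪z, T w⟫_ℂ = ⟪B (T z), T w⟫_ℂ := by
      rw [← selfAdjoint_inner hT, ← selfAdjoint_inner hT, mp_mul_mul hB]
    rw [inner_sub_left, sub_eq_zero] at h1 h2
    rw [inner_sub_left, ← h1, ← h2, h3, sub_self]
  have h := key (B z - B (B (T z)))
  rwa [map_sub, inner_self_eq_zero, sub_eq_zero] at h

/-- `A` vanishes on `Kᗮ` as soon as `K` contains `R(A)`, so every vector is the sum of an element
of `K` and one of `N(A)`. -/
lemma exists_add_ker {A : X →L[ℂ] X} (hA : IsSelfAdjoint A) (K : Submodule ℂ X)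
    (hK : IsClosed (K : Set X)) (hAK : ∀ x, A x ∈ K) (y : X) :
    ∃ k ∈ K, ∃ z, A z = 0 ∧ y = k + z := by
  have : CompleteSpace K := hK.completeSpace_coe
  obtain ⟨k, hk, z, hz, rfl⟩ := K.exists_add_mem_mem_orthogonal y
  refine ⟨k, hk, z, ?_, rfl⟩
  rw [← inner_self_eq_zero (𝕜 := ℂ), selfAdjoint_inner hA]
  exact K.inner_left_of_mem_orthogonal (hAK _) hz

/-- The bound says that `A` is bounded below on `R(A)`, hence on its closure, where `A` attains
all its values. -/
lemma isClosed_range_of_bound {A : X →L[ℂ] X} (hA : IsSelfAdjoint A) {M : ℝ}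
    (hM : ∀ x, ‖A x‖ ≤ M * ‖A (A x)‖) : IsClosed (Set.range A) := by
  set K : Submodule ℂ X := A.range.topologicalClosure with hKdef
  have hKc : IsClosed (K : Set X) := Submodule.isClosed_topologicalClosure _
  have hAK : ∀ x, A x ∈ K := fun x => Submodule.le_topologicalClosure _ ⟨x, rfl⟩
  have hb : ∀ u ∈ K, ‖u‖ ≤ M * ‖A u‖ := by
    have hc : IsClosed {u : X | ‖u‖ ≤ M * ‖A u‖} :=
      isClosed_le continuous_norm (by fun_prop)
    intro u hu
    refine closure_minimal ?_ hc hu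
    rintro _ ⟨x, rfl⟩
    exact hM x
  have : CompleteSpace K := hKc.completeSpace_coe
  have hanti : AntilipschitzWith M.toNNReal (A.comp K.subtypeL) := by
    refine ContinuousLinearMap.antilipschitz_of_bound _ fun u => ?_
    refine (hb u u.2).trans ?_
    exact mul_le_mul_of_nonneg_right (Real.le_coe_toNNReal M) (norm_nonneg _)
  have hcl := hanti.isClosed_range (A.comp K.subtypeL).uniformContinuous
  convert hcl using 1
  ext y
  constructor
  · rintro ⟨x, rfl⟩
    obtain ⟨k, hk, z, hz, rfl⟩ := exists_add_ker hA K hKc hAK x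
    exact ⟨⟨k, hk⟩, by simp [hz]⟩
  · rintro ⟨k, rfl⟩
    exact ⟨k, rfl⟩

lemma exists_sq_add_ker {A : X →L[ℂ] X} (hA : IsSelfAdjoint A)
    (hcl : IsClosed (Set.range A)) (y : X) : ∃ v z, A z = 0 ∧ y = A (A v) + z := by
  have hd := exists_add_ker hA A.range hcl (fun x => ⟨x, rfl⟩)
  obtain ⟨_, ⟨w, rfl⟩, z, hz, rfl⟩ := hd y
  obtain ⟨_, ⟨v, rfl⟩, z', hz', rfl⟩ := hd w
  exact ⟨v, z, hz, by simp [hz']⟩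

/-- The uniform boundedness principle for strongly convergent sequences. -/
lemma exists_bound_of_strong {L : X → X} {Tn : ℕ → X →L[ℂ] X}
    (h : ∀ x : X, Tendsto (fun n => Tn n x) atTop (𝓝 (L x))) : ∃ C : ℝ, ∀ n, ‖Tn n‖ ≤ C := by
  refine banach_steinhaus fun x => ?_
  obtain ⟨C, hC⟩ := (h x).norm.bddAbove_range
  exact ⟨C, fun n => hC ⟨n, rfl⟩⟩

lemma tendsto_apply_zero {Tn : ℕ → X →L[ℂ] X} {C : ℝ} (hC : ∀ n, ‖Tn n‖ ≤ C) {u : ℕ → X}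
    (hu : Tendsto u atTop (𝓝 0)) : Tendsto (fun n => Tn n (u n)) atTop (𝓝 0) := by
  refine squeeze_zero_norm (a := fun n => C * ‖u n‖) (fun n => (Tn n).le_of_opNorm_le (hC n) _) ?_
  simpa using hu.norm.const_mul C

lemma tendsto_sq_apply {A : X →L[ℂ] X} {An : ℕ → X →L[ℂ] X}
    (hconv : ∀ x : X, Tendsto (fun n => An n x) atTop (𝓝 (A x))) (x : X) :
    Tendsto (fun n => An n (An n x)) atTop (𝓝 (A (A x))) := by
  obtain ⟨C, hC⟩ := exists_bound_of_strong hconv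
  have h0 : Tendsto (fun n => An n (An n x - A x)) atTop (𝓝 0) :=
    tendsto_apply_zero hC (by simpa using (hconv x).sub_const (A x))
  simpa using h0.add (hconv (A x))

/-- (Du–Gan) For bounded self-adjoint `A`, `Aₙ` with all `R(Aₙ)` closed
and `Aₙ → A` strongly: `D(A†) = X` (equivalently `R(A)` closed) together with strong
convergence `Aₙ† y → A† y` holds iff `sup_n ‖Aₙ†‖ < ∞`. -/
theorem bounded_mp_inverse_strong_convergence_iff_uniform_bound
    (A : X →L[ℂ] X) (hA : IsSelfAdjoint A)
    (An : ℕ → X →L[ℂ] X) (hAn : ∀ n, IsSelfAdjoint (An n))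
    (hRanClosed : ∀ n, IsClosed (Set.range (An n)))
    (Bn : ℕ → X →L[ℂ] X) (hBn : ∀ n, IsMoorePenroseInvB (An n) (Bn n))
    (hconv : ∀ x : X, Tendsto (fun n => An n x) atTop (𝓝 (A x))) :
    (IsClosed (Set.range A) ∧
        ∃ B : X → X, IsMoorePenroseInvB A B ∧
          ∀ y : X, Tendsto (fun n => Bn n y) atTop (𝓝 (B y))) ↔
      ∃ M : ℝ, ∀ n, ‖Bn n‖ ≤ M := by
  constructor
  · rintro ⟨-, B, -, hB⟩
    exact exists_bound_of_strong hB
  · rintro ⟨M, hM⟩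
    have hle : ∀ x, ‖A x‖ ≤ M * ‖A (A x)‖ := by
      intro x
      refine le_of_tendsto_of_tendsto' (hconv x).norm
        ((tendsto_sq_apply hconv x).norm.const_mul M) fun n => ?_
      have h := (Bn n).le_of_opNorm_le (hM n) (An n (An n x))
      rwa [mp_apply_sq (hAn n) (hBn n)] at h
    have hcl := isClosed_range_of_bound hA hle
    choose v z hz hy using exists_sq_add_ker hA hcl
    refine ⟨hcl, fun y => A (v y), fun y => ⟨fun w hw => ?_, fun w => ?_⟩, fun y => ?_⟩
    · rw [selfAdjoint_inner hA, hw, inner_zero_right]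
    · rw [sub_eq_of_eq_add' (hy y), ← selfAdjoint_inner hA, hz, inner_zero_left]
    · have h1 : Tendsto (fun n => Bn n (A (A (v y)) - An n (An n (v y)))) atTop (𝓝 0) :=
        tendsto_apply_zero hM (by
          simpa using (tendsto_sq_apply hconv (v y)).const_sub (A (A (v y))))
      have h2 : Tendsto (fun n => Bn n (Bn n (An n (z y)))) atTop (𝓝 0) :=
        tendsto_apply_zero hM (tendsto_apply_zero hM (by simpa [hz] using hconv (z y)))
      have h3 := (h1.add (hconv (v y))).add h2
      rw [zero_add, add_zero] at h3
      refine h3.congr fun n => ?_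
      rw [← mp_eq_sq_apply (hAn n) (hBn n), map_sub, mp_apply_sq (hAn n) (hBn n), sub_add_cancel,
        ← map_add, ← hy]
end

section
/- Let X be a complex Hilbert space, let A be a (possibly unbounded) self-adjoint operator on X that is a bijection from D(A) onto X (so A^{-1} is a bounded operator on X), and let X_1 ⊆ X_2 ⊆ ⋯ be finite-dimensional subspaces of X with dense union, with P_n the orthogonal projection of X onto X_n. For each n let A_n : X_n → X_n be a self-adjoint invertible operator on X_n, and assume that for every λ ∈ ℂ \ ℝ and every x ∈ X, (λI_{X_n} − A_n)^{-1} P_n x → (λI − A)^{-1} x in norm. If sup_n ‖A_n^{-1} P_n‖ < +∞, then A_n^{-1} P_n x → A^{-1} x in norm for every x ∈ X. -/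
/-!
For `‖l • T‖ < 1` the operator `1 - l T` is invertible, so when `T` is the inverse of an operator
(composed with a projection in the Galerkin case), `-T (1 - l T)⁻¹` is the corresponding resolvent
at `l`. The uniform bound allows one small imaginary `l ≠ 0` to be used for `A` and all `Aₙ` at once.

Fix `x`, put `z = x - l A⁻¹ x` and `wₙ = (1 - l Bₙ)⁻¹ z`. Resolvent convergence at `z` says
`Bₙ wₙ → A⁻¹ x`. Since `wₙ = z + l Bₙ wₙ`, it follows that `wₙ → z + l A⁻¹ x = x`, and the uniform
bound on `Bₙ` then gives `Bₙ x = Bₙ wₙ + Bₙ (x - wₙ) → A⁻¹ x`.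
-/

open Filter Topology
open scoped InnerProductSpace

variable {X : Type*} [NormedAddCommGroup X] [InnerProductSpace ℂ X] [CompleteSpace X]

/-- `P` is the orthogonal projection of `X` onto the subspace `K`:
`P x ∈ K` and `x - P x ⟂ K` for every `x`. -/
def IsOrthProjOn (K : Set X) (P : X → X) : Prop :=
  ∀ x : X, P x ∈ K ∧ ∀ z ∈ K, ⟪x - P x, z⟫_ℂ = 0

/-- The Neumann series inverse of `1 - l T`, as a two-sided inverse stated pointwise. -/
lemma exists_neumann_inverse (T : X →L[ℂ] X) (l : ℂ) (h : ‖l • T‖ < 1) :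
    ∃ S : X →L[ℂ] X, (∀ x, S x - l • T (S x) = x) ∧ ∀ x, S (x - l • T x) = x := by
  obtain ⟨u, hu⟩ := isUnit_one_sub_of_norm_lt_one h
  refine ⟨(↑u⁻¹ : X →L[ℂ] X), fun x => ?_, fun x => ?_⟩
  · have h1 := DFunLike.congr_fun u.mul_inv x
    rw [hu] at h1
    simpa using h1
  · have h1 := DFunLike.congr_fun u.inv_mul x
    rw [hu] at h1
    simpa using h1

lemma IsOrthProjOn.apply_of_mem {Y : Type*} [NormedAddCommGroup Y] [InnerProductSpace ℂ Y]
    {K : Submodule ℂ Y} {P : Y → Y} (hP : IsOrthProjOn (K : Set Y) P) {v : Y} (hv : v ∈ K) : P v = v := by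
  have h := (hP v).2 (v - P v) (K.sub_mem hv (hP v).1)
  exact (sub_eq_zero.1 (inner_self_eq_zero.1 h)).symm

/-- (Edward) Let `A` be a self-adjoint operator that is a bijection from
`D(A)` onto `X` with bounded inverse `Ainv`, let `X₁ ⊆ X₂ ⊆ ⋯` be finite-dimensional
subspaces with dense union and orthogonal projections `Pₙ`, and let `Aₙ` be self-adjoint
(symmetric) invertible operators on `Xₙ` whose resolvents satisfy
`(l I_{Xₙ} - Aₙ)⁻¹ Pₙ x → (l I - A)⁻¹ x` for all nonreal `l`.  If
`sup_n ‖Aₙ⁻¹ Pₙ‖ < ∞` then `Aₙ⁻¹ Pₙ x → A⁻¹ x` in norm for every `x`. -/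
theorem inverse_strong_convergence_of_uniform_bound_galerkin
    (A : X →ₗ.[ℂ] X) (hA : IsSelfAdjoint A)
    (hAbij : ∀ y : X, ∃! x : A.domain, A x = y)
    (Ainv : X →L[ℂ] X)
    (hAinv : ∀ y : X, ∃ h : Ainv y ∈ A.domain, A ⟨Ainv y, h⟩ = y)
    (Xn : ℕ → Submodule ℂ X) (hfin : ∀ n, FiniteDimensional ℂ (Xn n))
    (hmono : ∀ n, Xn n ≤ Xn (n + 1))
    (hdense : Dense (⋃ n, (Xn n : Set X)))
    (Pn : ℕ → X →L[ℂ] X) (hPn : ∀ n, IsOrthProjOn (Xn n : Set X) (Pn n))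
    (An : ∀ n, Xn n →L[ℂ] Xn n)
    (hAnsym : ∀ n, ∀ u v : Xn n, ⟪(An n u : X), (v : X)⟫_ℂ = ⟪(u : X), (An n v : X)⟫_ℂ)
    (hAnbij : ∀ n, Function.Bijective (An n))
    (Bn : ℕ → X →L[ℂ] X)
    (hBn : ∀ n, ∀ x : X, ∃ h : Bn n x ∈ Xn n, ((An n ⟨Bn n x, h⟩ : Xn n) : X) = Pn n x)
    (hres : ∀ l : ℂ, l.im ≠ 0 → ∀ (R : X → X) (Rn : ℕ → X → X),
      IsResolventAt A l R →
      (∀ n, ∀ x : X, ∃ h : Rn n x ∈ Xn n,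
        l • Rn n x - ((An n ⟨Rn n x, h⟩ : Xn n) : X) = Pn n x) →
      ∀ x : X, Tendsto (fun n => Rn n x) atTop (𝓝 (R x)))
    (hbound : ∃ M : ℝ, ∀ n, ‖Bn n‖ ≤ M) :
    ∀ x : X, Tendsto (fun n => Bn n x) atTop (𝓝 (Ainv x)) := by
  intro x
  obtain ⟨M, hM⟩ := hbound
  set K : ℝ := max M ‖Ainv‖ with hK
  have hK0 : 0 ≤ K := (norm_nonneg _).trans (le_max_right _ _)
  set l : ℂ := (((K + 1)⁻¹ : ℝ) : ℂ) * Complex.I with hl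
  have him : l.im ≠ 0 := by
    have : l.im = (K + 1)⁻¹ := by
      rw [hl, Complex.im_ofReal_mul, Complex.I_im, mul_one]
    rw [this]
    positivity
  have hnl : ‖l‖ = (K + 1)⁻¹ := by
    rw [hl, norm_mul, Complex.norm_I, mul_one, Complex.norm_real, Real.norm_of_nonneg]
    positivity
  have hsmall : ∀ T : X →L[ℂ] X, ‖T‖ ≤ K → ‖l • T‖ < 1 := by
    intro T hT
    rw [norm_smul, hnl, inv_mul_lt_iff₀ (by positivity)]
    linarith
  obtain ⟨S, hS, hS'⟩ := exists_neumann_inverse Ainv l (hsmall _ (le_max_right _ _))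
  choose Sn hSn _ using fun n =>
    exists_neumann_inverse (Bn n) l (hsmall _ ((hM n).trans (le_max_left _ _)))
  have hR : IsResolventAt A l (fun y => -Ainv (S y)) := by
    intro y
    obtain ⟨h, hy⟩ := hAinv (S y)
    refine ⟨A.domain.neg_mem h, ?_⟩
    have e : A ⟨-Ainv (S y), A.domain.neg_mem h⟩ = -S y := by
      exact (A.map_neg ⟨Ainv (S y), h⟩).trans (congrArg Neg.neg hy)
    rw [e, smul_neg, sub_neg_eq_add, neg_add_eq_sub]
    exact hS y
  have hRn : ∀ n, ∀ y : X, ∃ h : -Bn n (Sn n y) ∈ Xn n,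
      l • (-Bn n (Sn n y)) - ((An n ⟨-Bn n (Sn n y), h⟩ : Xn n) : X) = Pn n y := by
    intro n y
    obtain ⟨h, hy⟩ := hBn n (Sn n y)
    refine ⟨(Xn n).neg_mem h, ?_⟩
    have e : (⟨-Bn n (Sn n y), (Xn n).neg_mem h⟩ : Xn n) = -⟨Bn n (Sn n y), h⟩ := rfl
    rw [e, map_neg, Submodule.coe_neg, hy, smul_neg, sub_neg_eq_add, neg_add_eq_sub]
    conv_rhs => rw [← hSn n y, map_sub, map_smul, (hPn n).apply_of_mem h]
  set z : X := x - l • Ainv x with hz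
  have h1 : Tendsto (fun n => Bn n (Sn n z)) atTop (𝓝 (Ainv x)) := by
    have := (hres l him _ (fun n y => -Bn n (Sn n y)) hR hRn z).neg
    simpa only [neg_neg, hz, hS' x] using this
  have h2 : Tendsto (fun n => x - Sn n z) atTop (𝓝 0) := by
    have h3 := (h1.const_sub (Ainv x)).const_smul l
    rw [sub_self, smul_zero] at h3
    refine h3.congr fun n => ?_
    have h4 := hSn n z
    rw [sub_eq_iff_eq_add] at h4
    conv_rhs => rw [h4, hz]
    rw [smul_sub]
    abel
  have h5 : Tendsto (fun n => Bn n (x - Sn n z)) atTop (𝓝 0) := by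
    refine squeeze_zero_norm (fun n => (Bn n).le_of_opNorm_le (hM n) _) ?_
    simpa using h2.norm.const_mul M
  have h6 := h1.add h5
  rw [add_zero] at h6
  refine h6.congr fun n => ?_
  rw [← map_add, add_sub_cancel]
end

section
/- Let X be a complex Hilbert space, let A be a (possibly unbounded) self-adjoint operator on X, and let (A_n) be a sequence of self-adjoint operators on X such that each range R(A_n) is closed. Assume s-lim_{n→∞} G(A_n) = G(A) and sup_n ‖A_n†‖ < +∞. Then R(A) is a closed subspace of X, and consequently D(A†) = R(A) ⊕ N(A) = X. -/
/-!
The proof is by duality. If `y ∈ R(A)` and `a ∈ D(A)`, graph convergence gives `yₙ ∈ R(Aₙ)` with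
`yₙ → y` and `(aₙ, Aₙ aₙ) → (a, A a)`. Since `yₙ = Aₙ (Aₙ† yₙ)` and `Aₙ` is symmetric,
`⟪yₙ, aₙ⟫ = ⟪Aₙ† yₙ, Aₙ aₙ⟫`, so `‖⟪yₙ, aₙ⟫‖ ≤ M ‖yₙ‖ ‖Aₙ aₙ‖`, and in the limit
`‖⟪y, a⟫‖ ≤ M ‖y‖ ‖A a‖` (`norm_inner_le_of_mem_range`). This bound is continuous in `y`, hence it
persists on the closure of `R(A)`. For such a `y` the functional `A a ↦ ⟪y, a⟫` is therefore
well defined and bounded on `R(A)`; Hahn–Banach and Riesz represent it by some `z`, and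
`⟪z, A a⟫ = ⟪y, a⟫` for all `a ∈ D(A)` says `A* z = y`, i.e. `A z = y`
(`mem_pRange_of_norm_inner_le`). So `R(A)` is closed, and the decomposition is
the orthogonal one, with `R(A)ᗮ = N(A*) = N(A)`.
-/

open Filter Topology
open scoped InnerProductSpace

variable {X : Type*} [NormedAddCommGroup X] [InnerProductSpace ℂ X] [CompleteSpace X]

/-- A self-adjoint operator is symmetric. -/
lemma inner_apply_of_isSelfAdjoint {T : X →ₗ.[ℂ] X} (hT : IsSelfAdjoint T) (x y : T.domain) :
    ⟪T x, (y : X)⟫_ℂ = ⟪(x : X), T y⟫_ℂ := by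
  have h := LinearPMap.adjoint_isFormalAdjoint hT.dense_domain
  rw [LinearPMap.isSelfAdjoint_def.mp hT] at h
  exact h x y

/-- Maximality of a self-adjoint operator: the weak form of `T y = w` implies `T y = w`. -/
lemma exists_apply_eq_of_inner {T : X →ₗ.[ℂ] X} (hT : IsSelfAdjoint T) {y w : X}
    (h : ∀ x : T.domain, ⟪w, (x : X)⟫_ℂ = ⟪y, T x⟫_ℂ) :
    ∃ hy : y ∈ T.domain, T ⟨y, hy⟩ = w := by
  have hadj : ∃ hy : y ∈ T.adjoint.domain, T.adjoint ⟨y, hy⟩ = w :=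
    ⟨LinearPMap.mem_adjoint_domain_of_exists y ⟨w, h⟩,
      LinearPMap.adjoint_apply_eq hT.dense_domain _ h⟩
  rwa [LinearPMap.isSelfAdjoint_def.mp hT] at hadj

lemma pRange_eq_range (T : X →ₗ.[ℂ] X) : pRange T = (LinearMap.range T.toFun : Set X) := by
  ext y
  simp [pRange]

/-- The Moore–Penrose inverse is a right inverse on the range. -/
lemma IsMoorePenroseInv.apply_eq {T : X →ₗ.[ℂ] X} {B : X → X} (hB : IsMoorePenroseInv T B)
    {y : X} (hy : y ∈ pRange T) : ∃ h : B y ∈ T.domain, T ⟨B y, h⟩ = y := by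
  obtain ⟨h, -, h2⟩ := hB y
  refine ⟨h, ?_⟩
  obtain ⟨x, rfl⟩ := hy
  have := h2 (T x - T ⟨B (T x), h⟩) ⟨x - ⟨B (T x), h⟩, T.map_sub _ _⟩
  exact (sub_eq_zero.mp (inner_self_eq_zero.mp this)).symm

lemma norm_inner_le_of_isMoorePenroseInv {T : X →ₗ.[ℂ] X} (hT : IsSelfAdjoint T) {B : X →L[ℂ] X}
    (hB : IsMoorePenroseInv T B) {M : ℝ} (hM : ‖B‖ ≤ M) {y : X} (hy : y ∈ pRange T)
    (a : T.domain) : ‖⟪y, (a : X)⟫_ℂ‖ ≤ M * ‖y‖ * ‖T a‖ := by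
  obtain ⟨h, h2⟩ := hB.apply_eq hy
  have h3 : ⟪y, (a : X)⟫_ℂ = ⟪B y, T a⟫_ℂ := by
    conv_lhs => rw [← h2]
    exact inner_apply_of_isSelfAdjoint hT _ a
  rw [h3]
  exact (norm_inner_le_norm _ _).trans (by gcongr; exact B.le_of_opNorm_le hM y)

/-- The bound `‖⟪y, a⟫‖ ≤ M ‖y‖ ‖A a‖` holds for the `Aₙ` with a common `M`, so it passes
to the limit along sequences in `G(Aₙ)` approximating points of `G(A)`. -/
lemma norm_inner_le_of_mem_range {A : X →ₗ.[ℂ] X} {An : ℕ → X →ₗ.[ℂ] X}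
    (hAn : ∀ n, IsSelfAdjoint (An n)) {Bn : ℕ → X →L[ℂ] X}
    (hBn : ∀ n, IsMoorePenroseInv (An n) (Bn n))
    (hgraph : (A.graph : Set (X × X)) ⊆ sLim (fun n => ((An n).graph : Set (X × X))))
    {M : ℝ} (hM : ∀ n, ‖Bn n‖ ≤ M) {y : X} (hy : y ∈ pRange A) (a : A.domain) :
    ‖⟪y, (a : X)⟫_ℂ‖ ≤ M * ‖y‖ * ‖A a‖ := by
  obtain ⟨x, rfl⟩ := hy
  obtain ⟨u, hu, hul⟩ := hgraph (A.mem_graph x)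
  obtain ⟨v, hv, hvl⟩ := hgraph (A.mem_graph a)
  have hu2 := (continuous_snd.tendsto _).comp hul
  have hv1 := (continuous_fst.tendsto _).comp hvl
  have hv2 := (continuous_snd.tendsto _).comp hvl
  refine le_of_tendsto_of_tendsto' (hu2.inner (𝕜 := ℂ) hv1).norm
    ((hu2.norm.const_mul M).mul hv2.norm) fun n => ?_
  obtain ⟨p, -, hp2⟩ := (LinearPMap.mem_graph_iff _).mp (hu n)
  obtain ⟨q, hq1, hq2⟩ := (LinearPMap.mem_graph_iff _).mp (hv n)
  simp only [Function.comp_apply]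
  rw [← hq1, ← hq2]
  exact norm_inner_le_of_isMoorePenroseInv (hAn n) (hBn n) (hM n) ⟨p, hp2⟩ q

/-- Range criterion: `y ∈ R(A)` as soon as `a ↦ ⟪y, a⟫` is dominated by `‖A a‖`. -/
lemma mem_pRange_of_norm_inner_le {A : X →ₗ.[ℂ] X} (hA : IsSelfAdjoint A) {y : X} {C : ℝ}
    (h : ∀ a : A.domain, ‖⟪y, (a : X)⟫_ℂ‖ ≤ C * ‖A a‖) : y ∈ pRange A := by
  let f : A.domain →ₗ[ℂ] ℂ := (innerₛₗ ℂ y).comp A.domain.subtype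
  have hf : ∀ a, f a = ⟪y, (a : X)⟫_ℂ := fun a => rfl
  -- The domination makes `f` vanish on the kernel of `A`, so it factors algebraically through `A`.
  obtain ⟨g, hg⟩ : ∃ g : X →ₗ[ℂ] ℂ, g.comp A.toFun = f := by
    suffices hmem : f ∈ LinearMap.range A.toFun.dualMap from hmem
    rw [LinearMap.range_dualMap_eq_dualAnnihilator_ker, Submodule.mem_dualAnnihilator]
    intro a ha
    have h1 : A a = 0 := ha
    have h2 := h a
    rw [h1, norm_zero, mul_zero] at h2
    exact norm_le_zero_iff.mp h2
  have hg' : ∀ a : A.domain, g (A a) = ⟪y, (a : X)⟫_ℂ := fun a => LinearMap.congr_fun hg a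
  let φ : StrongDual ℂ (LinearMap.range A.toFun) :=
    (g.comp (LinearMap.range A.toFun).subtype).mkContinuous C (by
      rintro ⟨_, a, rfl⟩
      exact (congrArg norm (hg' a)).trans_le (h a))
  obtain ⟨ψ, hψ, -⟩ := exists_extension_norm_eq _ φ
  have hz : ∀ a : A.domain, ⟪(InnerProductSpace.toDual ℂ X).symm ψ, A a⟫_ℂ = ⟪y, (a : X)⟫_ℂ := by
    intro a
    rw [InnerProductSpace.toDual_symm_apply]
    exact (hψ ⟨A a, a, rfl⟩).trans (hg' a)
  obtain ⟨hd, he⟩ := exists_apply_eq_of_inner hA fun a => (hz a).symm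
  exact ⟨⟨_, hd⟩, he⟩

lemma inner_eq_zero_of_mem_pRange_of_mem_pKer {A : X →ₗ.[ℂ] X} (hA : IsSelfAdjoint A) {y z : X}
    (hy : y ∈ pRange A) (hz : z ∈ pKer A) : ⟪y, z⟫_ℂ = 0 := by
  obtain ⟨x, rfl⟩ := hy
  obtain ⟨h, h0⟩ := hz
  rw [inner_apply_of_isSelfAdjoint hA x ⟨z, h⟩, h0, inner_zero_right]

/-- If the self-adjoint operators `Aₙ` (with closed ranges and
Moore–Penrose inverses `Bn n`) converge to the self-adjoint `A` in the strong graph sense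
and `sup_n ‖Aₙ†‖ < ∞`, then `R(A)` is closed, and consequently
`D(A†) = R(A) ⊕ N(A) = X`: every `y ∈ X` decomposes uniquely as a sum of an element of
`R(A)` and an element of `N(A)`. -/
theorem range_closed_of_graph_convergence_and_uniform_bound
    (A : X →ₗ.[ℂ] X) (hA : IsSelfAdjoint A)
    (An : ℕ → X →ₗ.[ℂ] X) (hAn : ∀ n, IsSelfAdjoint (An n))
    (hRanClosed : ∀ n, IsClosed (pRange (An n)))
    (Bn : ℕ → X →L[ℂ] X) (hBn : ∀ n, IsMoorePenroseInv (An n) (Bn n))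
    (hgraph : sLim (fun n => ((An n).graph : Set (X × X))) = (A.graph : Set (X × X)))
    (hbound : ∃ M : ℝ, ∀ n, ‖Bn n‖ ≤ M) :
    IsClosed (pRange A) ∧
      ∀ y : X, ∃! p : X × X, p.1 ∈ pRange A ∧ p.2 ∈ pKer A ∧ y = p.1 + p.2 := by
  obtain ⟨M, hM⟩ := hbound
  have hclosed : IsClosed (pRange A) := by
    refine isClosed_of_closure_subset fun y hy => ?_
    refine mem_pRange_of_norm_inner_le hA (C := M * ‖y‖) fun a => ?_
    have hcl : IsClosed {y : X | ‖⟪y, (a : X)⟫_ℂ‖ ≤ M * ‖y‖ * ‖A a‖} :=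
      isClosed_le (by fun_prop) (by fun_prop)
    exact closure_minimal
      (fun w hw => norm_inner_le_of_mem_range hAn hBn hgraph.ge hM hw a) hcl hy
  refine ⟨hclosed, fun y => ?_⟩
  have hK := pRange_eq_range A
  have : CompleteSpace (LinearMap.range A.toFun) :=
    (hK ▸ hclosed).completeSpace_coe
  obtain ⟨v, hv, w, hw, hvw⟩ := (LinearMap.range A.toFun).exists_add_mem_mem_orthogonal y
  refine ⟨(v, w), ⟨hK ▸ hv, ?_, hvw⟩, ?_⟩
  · refine exists_apply_eq_of_inner hA fun x => ?_
    rw [inner_zero_left]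
    exact (Submodule.inner_left_of_mem_orthogonal (LinearMap.mem_range_self A.toFun x) hw).symm
  · rintro ⟨v', w'⟩ ⟨hv', hw', h'⟩
    dsimp only at hv' hw' h'
    have hd : v' - v ∈ LinearMap.range A.toFun :=
      Submodule.sub_mem _ (by rw [hK] at hv'; exact hv') hv
    have he : v' - v = w - w' := by
      rw [sub_eq_sub_iff_add_eq_add, ← h', hvw, add_comm]
    -- The difference lies in the range and is orthogonal to it.
    have h0 : ⟪v' - v, v' - v⟫_ℂ = 0 := by
      nth_rewrite 2 [he]
      rw [inner_sub_right, Submodule.inner_right_of_mem_orthogonal hd hw,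
        inner_eq_zero_of_mem_pRange_of_mem_pKer hA (by rw [hK]; exact hd) hw', sub_zero]
    have hz := inner_self_eq_zero.mp h0
    rw [hz] at he
    exact Prod.ext (sub_eq_zero.mp hz) (sub_eq_zero.mp he.symm).symm
end

section
/- Let X be a complex Hilbert space and let (A_n) and A be (possibly unbounded) self-adjoint operators on X with G(A) ⊆ s-lim_{n→∞} G(A_n). Suppose x ∈ X is such that there exist indices k_1 < k_2 < ⋯ and vectors x_j ∈ N(A_{k_j}) with x_j ⇀ x weakly. Then x ∈ N(A). In other words, w-l̃im_{n→∞} N(A_n) ⊆ N(A). -/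
/-!
Let `u j ∈ N(A_{k j})` converge weakly to `x`. For `y ∈ D(A)`, choose `(yₙ, Aₙ yₙ) → (y, A y)` in
norm. Symmetry of the `Aₙ` gives `⟪u j, A_{k j} y_{k j}⟫ = ⟪A_{k j} (u j), y_{k j}⟫ = 0`, and the
pairing of a weakly convergent sequence with a norm convergent one converges
(`WeakTendsto.tendsto_inner`, which rests on Banach–Steinhaus), so `⟪x, A y⟫ = 0` for every
`y ∈ D(A)`. Thus `x ∈ D(A†)` with `A† x = 0`, and `A† = A`.
-/

open Filter Topology
open scoped InnerProductSpace

variable {X : Type*} [NormedAddCommGroup X] [InnerProductSpace ℂ X] [CompleteSpace X]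

/-- A weakly convergent sequence is norm bounded, by the uniform boundedness principle. -/
lemma WeakTendsto.exists_norm_le {u : ℕ → X} {x : X} (hu : WeakTendsto u x) :
    ∃ C : ℝ, ∀ n, ‖u n‖ ≤ C := by
  obtain ⟨C, hC⟩ := banach_steinhaus (g := fun n => innerSL ℂ (u n)) (fun z => by
    obtain ⟨C, hC⟩ := (hu z).norm.bddAbove_range
    exact ⟨C, fun n => by simpa using hC ⟨n, rfl⟩⟩)
  exact ⟨C, fun n => by simpa using hC n⟩

lemma WeakTendsto.tendsto_inner {u v : ℕ → X} {x y : X} (hu : WeakTendsto u x)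
    (hv : Tendsto v atTop (𝓝 y)) :
    Tendsto (fun n => ⟪u n, v n⟫_ℂ) atTop (𝓝 ⟪x, y⟫_ℂ) := by
  obtain ⟨C, hC⟩ := hu.exists_norm_le
  have hdiff : Tendsto (fun n => ⟪u n, v n - y⟫_ℂ) atTop (𝓝 0) := by
    refine squeeze_zero_norm (a := fun n => C * ‖v n - y‖) (fun n => ?_) ?_
    · exact (norm_inner_le_norm _ _).trans
        (mul_le_mul_of_nonneg_right (hC n) (norm_nonneg _))
    · simpa using (tendsto_iff_norm_sub_tendsto_zero.1 hv).const_mul C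
  simpa [inner_sub_right] using hdiff.add (hu y)

lemma inner_eq_zero_of_mem_pKer {T : X →ₗ.[ℂ] X} (hT : IsSelfAdjoint T) {u : X}
    (hu : u ∈ pKer T) {p : X × X} (hp : p ∈ T.graph) : ⟪u, p.2⟫_ℂ = 0 := by
  obtain ⟨hdom, h0⟩ := hu
  obtain ⟨y, -, hy⟩ := (LinearPMap.mem_graph_iff T).1 hp
  have hsymm : T.IsFormalAdjoint T := by
    have h := LinearPMap.adjoint_isFormalAdjoint hT.dense_domain
    rwa [LinearPMap.isSelfAdjoint_def.1 hT] at h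
  rw [← hy, ← hsymm ⟨u, hdom⟩ y, h0, inner_zero_left]

/-- A vector orthogonal to the range of a self-adjoint operator lies in its kernel. -/
lemma mem_pKer_of_forall_inner_eq_zero {T : X →ₗ.[ℂ] X} (hT : IsSelfAdjoint T) {x : X}
    (hx : ∀ y : T.domain, ⟪x, T y⟫_ℂ = 0) : x ∈ pKer T := by
  have hmem : x ∈ pKer T.adjoint := by
    have hdom : x ∈ T.adjoint.domain :=
      LinearPMap.mem_adjoint_domain_of_exists x ⟨0, fun y => by rw [hx y, inner_zero_left]⟩
    exact ⟨hdom, LinearPMap.adjoint_apply_eq hT.dense_domain ⟨x, hdom⟩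
      (fun y => by rw [hx y, inner_zero_left])⟩
  rwa [LinearPMap.isSelfAdjoint_def.1 hT] at hmem

/-- If `G(A) ⊆ s-lim G(Aₙ)` for self-adjoint operators `Aₙ`, `A`, then
every weak limit of a subsequence of kernel elements `x_j ∈ N(A_{k_j})` lies in `N(A)`;
i.e. `w-l̃im N(Aₙ) ⊆ N(A)`. -/
theorem weak_subseq_limit_of_kernels_mem_kernel
    (A : X →ₗ.[ℂ] X) (hA : IsSelfAdjoint A)
    (An : ℕ → X →ₗ.[ℂ] X) (hAn : ∀ n, IsSelfAdjoint (An n))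
    (hgraph : (A.graph : Set (X × X)) ⊆ sLim (fun n => ((An n).graph : Set (X × X)))) :
    wLim (fun n => pKer (An n)) ⊆ pKer A := by
  rintro x ⟨k, hk, u, hu, hux⟩
  refine mem_pKer_of_forall_inner_eq_zero hA fun y => ?_
  obtain ⟨p, hp, hlim⟩ := hgraph (A.mem_graph y)
  have hlim₂ : Tendsto (fun j => (p (k j)).2) atTop (𝓝 (A y)) :=
    ((continuous_snd.tendsto _).comp hlim).comp hk.tendsto_atTop
  have hpair := hux.tendsto_inner hlim₂
  have hzero : (fun j => ⟪u j, (p (k j)).2⟫_ℂ) = fun _ => 0 :=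
    funext fun j => inner_eq_zero_of_mem_pKer (hAn (k j)) (hu j) (hp (k j))
  rw [hzero] at hpair
  exact tendsto_nhds_unique hpair tendsto_const_nhds
end

section
/- Let X be a complex Hilbert space, let A be a (possibly unbounded) self-adjoint operator on X, and let (A_n) be self-adjoint operators on X with closed ranges R(A_n). Assume s-lim_{n→∞} G(A_n) = G(A) and sup_n ‖A_n†‖ < +∞. Then R(A) is closed and the orthogonal projections onto the ranges converge strongly: P_{R(A_n)} x → P_{R(A)} x in norm for every x ∈ X. -/
/-!
Everything is phrased through graphs: `(x, u) ∈ T.graph` means `x ∈ D(T)` and `T x = u`.  For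
self-adjoint `T` the graph equals its own adjoint subspace, so it is closed, `T` is symmetric, and
`R(T)ᗮ = N(T)`.

*Decomposition.*  If `B` is the Moore–Penrose inverse of `T` and `(x, u) ∈ T.graph`, then
`x - B u ∈ N(T)`.  Since `N(T) ⟂ R(T)`, every `b ∈ R(T)` satisfies
`⟪x, b⟫ = ⟪B u, b⟫`, so `‖⟪x, b⟫‖ ≤ ‖B‖ ‖u‖ ‖b‖`.

*Closed range.*  The last inequality, with `‖Bₙ‖ ≤ M`, passes to the limit along the graphs
(`norm_inner_le_of_sLim`).  By density it holds for `b` in the closure of `R(A)`; taking `b = x`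
gives `‖x‖ ≤ M ‖A x‖` for `x ∈ D(A)` in the closure of `R(A)`, which is `N(A)ᗮ`.  Hence `A`
restricted to `N(A)ᗮ` is bounded below, and since its graph is closed its range, which is all of
`R(A)`, is closed.

*Convergence of the projections.*  Write `x = p + q` with `p = P x ∈ R(A)` and `q ∈ N(A)`.  Graph
convergence provides `aₙ ∈ R(Aₙ)` with `aₙ → p`, and `(yₙ, vₙ) ∈ G(Aₙ)` with `yₙ → q`, `vₙ → 0`;
the bound on `Bₙ` gives `kₙ := yₙ - Bₙ vₙ ∈ N(Aₙ)` with `kₙ → q`.  Orthogonality of `R(Aₙ)` and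
`N(Aₙ)` yields `‖Pₙ x - aₙ‖ ≤ ‖x - aₙ - kₙ‖ → 0`.
-/


open Filter Topology
open scoped InnerProductSpace

variable {X : Type*} [NormedAddCommGroup X] [InnerProductSpace ℂ X] [CompleteSpace X]

lemma mem_pRange_iff {T : X →ₗ.[ℂ] X} {y : X} : y ∈ pRange T ↔ ∃ x, (x, y) ∈ T.graph := by
  constructor
  · rintro ⟨x, rfl⟩
    exact ⟨x, T.mem_graph x⟩
  · rintro ⟨x, hx⟩
    obtain ⟨z, -, hz⟩ := T.mem_graph_iff.1 hx
    exact ⟨z, hz⟩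

/-- The graph of a self-adjoint operator is its own adjoint subspace. -/
lemma mem_graph_iff_of_isSelfAdjoint {T : X →ₗ.[ℂ] X} (hT : IsSelfAdjoint T) {x u : X} :
    (x, u) ∈ T.graph ↔ ∀ a b, (a, b) ∈ T.graph → ⟪b, x⟫_ℂ = ⟪a, u⟫_ℂ := by
  have h := LinearPMap.adjoint_graph_eq_graph_adjoint hT.dense_domain
  rw [LinearPMap.isSelfAdjoint_def.1 hT] at h
  conv_lhs => rw [h, Submodule.mem_adjoint_iff]
  simp only [sub_eq_zero]

lemma isClosed_graph {T : X →ₗ.[ℂ] X} (hT : IsSelfAdjoint T) :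
    IsClosed (T.graph : Set (X × X)) := by
  have : (T.graph : Set (X × X)) =
      ⋂ a, ⋂ b, ⋂ (_ : (a, b) ∈ T.graph), {p : X × X | ⟪b, p.1⟫_ℂ = ⟪a, p.2⟫_ℂ} := by
    ext ⟨x, u⟩
    simp only [SetLike.mem_coe, Set.mem_iInter]
    exact mem_graph_iff_of_isSelfAdjoint hT
  rw [this]
  exact isClosed_iInter fun a => isClosed_iInter fun b => isClosed_iInter fun _ =>
    isClosed_eq (by fun_prop) (by fun_prop)

/-- `R(T)ᗮ ⊆ N(T)` for self-adjoint `T`. -/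
lemma ker_of_orthogonal_range {T : X →ₗ.[ℂ] X} (hT : IsSelfAdjoint T) {x : X}
    (h : ∀ w ∈ pRange T, ⟪x, w⟫_ℂ = 0) : (x, (0 : X)) ∈ T.graph := by
  refine (mem_graph_iff_of_isSelfAdjoint hT).2 fun a b hab => ?_
  rw [inner_zero_right, ← inner_eq_zero_symm]
  exact h b (mem_pRange_iff.2 ⟨a, hab⟩)

/-- `R(T) ⟂ N(T)` for self-adjoint `T`. -/
lemma inner_ker_range {T : X →ₗ.[ℂ] X} (hT : IsSelfAdjoint T) {k w : X}
    (hk : (k, (0 : X)) ∈ T.graph) (hw : w ∈ pRange T) : ⟪k, w⟫_ℂ = 0 := by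
  obtain ⟨z, hz⟩ := mem_pRange_iff.1 hw
  rw [inner_eq_zero_symm, (mem_graph_iff_of_isSelfAdjoint hT).1 hk z w hz, inner_zero_right]

/-- The component `x - T† T x` of `x ∈ D(T)` lies in the kernel of `T`. -/
lemma sub_moorePenrose_mem_ker {T : X →ₗ.[ℂ] X} {B : X → X} (hB : IsMoorePenroseInv T B)
    {x u : X} (hx : (x, u) ∈ T.graph) : (x - B u, (0 : X)) ∈ T.graph := by
  obtain ⟨h, -, h2⟩ := hB u
  have hsub := T.graph.sub_mem hx (T.mem_graph ⟨B u, h⟩)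
  rw [Prod.mk_sub_mk] at hsub
  -- `u - T (B u)` is both in the range of `T` and orthogonal to it
  have h0 : u - T ⟨B u, h⟩ = 0 :=
    inner_self_eq_zero.1 (h2 _ (mem_pRange_iff.2 ⟨_, hsub⟩))
  rwa [h0] at hsub

/-- The uniform bound on the Moore–Penrose inverses survives in the strong graph limit as a bound
on the pairing of `D(A)` with `R(A)`. -/
lemma norm_inner_le_of_sLim {A : X →ₗ.[ℂ] X} {An : ℕ → X →ₗ.[ℂ] X}
    (hAn : ∀ n, IsSelfAdjoint (An n))
    {Bn : ℕ → X →L[ℂ] X} (hBn : ∀ n, IsMoorePenroseInv (An n) (Bn n))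
    (hgraph : sLim (fun n => ((An n).graph : Set (X × X))) = (A.graph : Set (X × X)))
    {M : ℝ} (hM : ∀ n, ‖Bn n‖ ≤ M) {x u w : X} (hx : (x, u) ∈ A.graph) (hw : w ∈ pRange A) :
    ‖⟪x, w⟫_ℂ‖ ≤ M * ‖u‖ * ‖w‖ := by
  obtain ⟨z, hz⟩ := mem_pRange_iff.1 hw
  rw [← SetLike.mem_coe, ← hgraph] at hx hz
  obtain ⟨s, hs, hsl⟩ := hx
  obtain ⟨t, ht, htl⟩ := hz
  have s1 : Tendsto (fun n => (s n).1) atTop (𝓝 x) := hsl.fst_nhds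
  have s2 : Tendsto (fun n => (s n).2) atTop (𝓝 u) := hsl.snd_nhds
  have t2 : Tendsto (fun n => (t n).2) atTop (𝓝 w) := htl.snd_nhds
  refine le_of_tendsto_of_tendsto' (s1.inner t2).norm
    ((s2.norm.const_mul M).mul t2.norm) fun n => ?_
  have hk := inner_ker_range (hAn n) (sub_moorePenrose_mem_ker (hBn n) (hs n))
    (mem_pRange_iff.2 ⟨_, ht n⟩)
  rw [inner_sub_left, sub_eq_zero] at hk
  rw [hk]
  refine (norm_inner_le_norm _ _).trans ?_
  gcongr
  exact (Bn n).le_of_opNorm_le (hM n) _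

/-- A self-adjoint operator whose domain pairs with its range in a bounded way has closed range. -/
lemma isClosed_pRange_of_norm_inner_le {A : X →ₗ.[ℂ] X} (hA : IsSelfAdjoint A) {M : ℝ}
    (hM : ∀ x u w : X, (x, u) ∈ A.graph → w ∈ pRange A → ‖⟪x, w⟫_ℂ‖ ≤ M * ‖u‖ * ‖w‖) :
    IsClosed (pRange A) := by
  set R : Submodule ℂ X := A.graph.map (LinearMap.snd ℂ X X) with hR
  have hRmem : ∀ y, y ∈ R ↔ y ∈ pRange A := fun y => by
    simp [hR, mem_pRange_iff, Submodule.mem_map]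
  set K : Submodule ℂ X := R.topologicalClosure with hK
  have hKc : IsClosed (K : Set X) := R.isClosed_topologicalClosure
  have : CompleteSpace K := hKc.completeSpace_coe
  have hRK : R ≤ K := R.le_topologicalClosure
  -- the bound extends from the range to its closure, and there it can be tested with `w = x`
  have hbd : ∀ x u : X, (x, u) ∈ A.graph → x ∈ K → ‖x‖ ≤ M * ‖u‖ := by
    intro x u hx hxK
    have hcl : IsClosed {w : X | ‖⟪x, w⟫_ℂ‖ ≤ M * ‖u‖ * ‖w‖} :=
      isClosed_le (by fun_prop) (by fun_prop)
    have h1 : ‖⟪x, x⟫_ℂ‖ ≤ M * ‖u‖ * ‖x‖ :=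
      closure_minimal (fun w hw => hM x u w hx ((hRmem w).1 hw)) hcl hxK
    have hsq : ‖⟪x, x⟫_ℂ‖ = ‖x‖ * ‖x‖ := by
      rw [inner_self_eq_norm_sq_to_K]
      simp [sq]
    rw [hsq] at h1
    rcases (norm_nonneg x).eq_or_lt with h0 | h0
    · have hx0 : x = 0 := norm_eq_zero.1 h0.symm
      subst hx0
      have hu : u = 0 := A.mem_graph_snd_inj hx A.graph.zero_mem rfl
      simp [hu]
    · exact le_of_mul_le_mul_right h1 h0
  -- the graph of the restriction of `A` to `K`, the orthogonal complement of its kernel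
  let G : Submodule ℂ (X × X) := A.graph ⊓ K.comap (LinearMap.fst ℂ X X)
  have hGc : IsClosed (G : Set (X × X)) :=
    (isClosed_graph hA).inter (hKc.preimage continuous_fst)
  have : CompleteSpace G := hGc.completeSpace_coe
  let f : G →L[ℂ] X := (ContinuousLinearMap.snd ℂ X X).comp G.subtypeL
  have hf : AntilipschitzWith (Real.toNNReal (max M 1)) f := by
    refine AddMonoidHomClass.antilipschitz_of_bound f fun p => ?_
    obtain ⟨⟨x, u⟩, hx, hxK⟩ := p
    rw [Real.coe_toNNReal _ (zero_le_one.trans (le_max_right _ _))]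
    refine max_le ((hbd x u hx hxK).trans ?_) ?_
    · exact mul_le_mul_of_nonneg_right (le_max_left _ _) (norm_nonneg _)
    · exact le_mul_of_one_le_left (norm_nonneg u) (le_max_right _ _)
  have hrange : pRange A = Set.range f := by
    ext y
    constructor
    · intro hy
      obtain ⟨x, hx⟩ := mem_pRange_iff.1 hy
      -- projecting `x` onto `K` changes it by an element of the kernel only
      have hker : (x - K.starProjection x, (0 : X)) ∈ A.graph :=
        ker_of_orthogonal_range hA fun w hw =>
          Submodule.inner_left_of_mem_orthogonal (hRK ((hRmem w).2 hw))
            (Submodule.sub_starProjection_mem_orthogonal x)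
      have hmem := A.graph.sub_mem hx hker
      rw [Prod.mk_sub_mk, sub_sub_cancel, sub_zero] at hmem
      exact ⟨⟨_, hmem, Submodule.starProjection_apply_mem K x⟩, rfl⟩
    · rintro ⟨⟨⟨x, u⟩, hx, -⟩, rfl⟩
      exact mem_pRange_iff.2 ⟨x, hx⟩
  rw [hrange]
  exact hf.isClosed_range f.uniformContinuous

/-- Comparison of the projection onto `R(T)` with an approximate splitting `x ≈ a + k`, where `a` is
in `R(T)` and `k` in `N(T)`, hence orthogonal to `R(T)`. -/
lemma norm_proj_sub_le {T : X →ₗ.[ℂ] X} (hT : IsSelfAdjoint T) {P : X → X}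
    (hP : IsOrthProjOn (pRange T) P) {x a k : X} (ha : a ∈ pRange T)
    (hk : (k, (0 : X)) ∈ T.graph) : ‖P x - a‖ ≤ ‖x - a - k‖ := by
  obtain ⟨hPx, hPo⟩ := hP x
  have hd : P x - a ∈ pRange T := by
    obtain ⟨z, hz⟩ := mem_pRange_iff.1 hPx
    obtain ⟨c, hc⟩ := mem_pRange_iff.1 ha
    exact mem_pRange_iff.2 ⟨z - c, T.graph.sub_mem hz hc⟩
  -- Pythagoras: `x - a - k = (P x - a) + (x - P x - k)` with orthogonal summands
  have ho : ⟪x - P x - k, P x - a⟫_ℂ = 0 := by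
    rw [inner_sub_left, hPo _ hd, inner_ker_range hT hk hd, sub_zero]
  have hpy := norm_add_sq_eq_norm_sq_add_norm_sq_of_inner_eq_zero _ _ ho
  have he : x - P x - k + (P x - a) = x - a - k := by abel
  rw [he] at hpy
  nlinarith [norm_nonneg (x - a - k), norm_nonneg (P x - a), norm_nonneg (x - P x - k)]

/-- Under strong graph convergence and the uniform bound on the
Moore–Penrose inverses, `R(A)` is closed and the orthogonal projections onto the ranges
`R(Aₙ)` converge strongly to the orthogonal projection onto `R(A)`. -/
theorem range_projections_strong_convergence
    (A : X →ₗ.[ℂ] X) (hA : IsSelfAdjoint A)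
    (An : ℕ → X →ₗ.[ℂ] X) (hAn : ∀ n, IsSelfAdjoint (An n))
    (hRanClosed : ∀ n, IsClosed (pRange (An n)))
    (Bn : ℕ → X →L[ℂ] X) (hBn : ∀ n, IsMoorePenroseInv (An n) (Bn n))
    (hgraph : sLim (fun n => ((An n).graph : Set (X × X))) = (A.graph : Set (X × X)))
    (hbound : ∃ M : ℝ, ∀ n, ‖Bn n‖ ≤ M) :
    IsClosed (pRange A) ∧
      ∀ (P : X → X) (Pn : ℕ → X → X),
        IsOrthProjOn (pRange A) P → (∀ n, IsOrthProjOn (pRange (An n)) (Pn n)) →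
        ∀ x : X, Tendsto (fun n => Pn n x) atTop (𝓝 (P x)) := by
  obtain ⟨M, hM⟩ := hbound
  refine ⟨isClosed_pRange_of_norm_inner_le hA fun x u w hx hw =>
    norm_inner_le_of_sLim hAn hBn hgraph hM hx hw, fun P Pn hP hPn x => ?_⟩
  obtain ⟨hPx, hPo⟩ := hP x
  obtain ⟨z, hz⟩ := mem_pRange_iff.1 hPx
  have hq := ker_of_orthogonal_range hA hPo
  rw [← SetLike.mem_coe, ← hgraph] at hz hq
  obtain ⟨s, hs, hsl⟩ := hz
  obtain ⟨t, ht, htl⟩ := hq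
  have s2 : Tendsto (fun n => (s n).2) atTop (𝓝 (P x)) := hsl.snd_nhds
  have t1 : Tendsto (fun n => (t n).1) atTop (𝓝 (x - P x)) := htl.fst_nhds
  have t2 : Tendsto (fun n => (t n).2) atTop (𝓝 0) := htl.snd_nhds
  have hB0 : Tendsto (fun n => Bn n (t n).2) atTop (𝓝 0) := by
    refine squeeze_zero_norm (fun n => (Bn n).le_of_opNorm_le (hM n) _) ?_
    simpa using t2.norm.const_mul M
  have hdist : Tendsto (fun n => x - (s n).2 - ((t n).1 - Bn n (t n).2)) atTop (𝓝 0) := by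
    simpa using (s2.const_sub x).sub (t1.sub hB0)
  have hdiff : Tendsto (fun n => Pn n x - (s n).2) atTop (𝓝 0) := by
    refine squeeze_zero_norm (fun n => norm_proj_sub_le (hAn n) (hPn n)
      (mem_pRange_iff.2 ⟨_, hs n⟩) (sub_moorePenrose_mem_ker (hBn n) (ht n))) ?_
    simpa using hdist.norm
  simpa using hdiff.add s2
end
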